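/- arXiv:1607.04728 — 3 statements merged into one kernel-verified Lean document; each statement's English description precedes it below -/
import Mathlib

section
/- Let x be either an aperiodic two-sided infinite word over A, or an aperiodic recurrent one-sided infinite word over A. Then there exist languages S, T ⊆ A* with Fac(x) ⊆ S T such that for every n ≥ 6, p_S(n) ≤ 12 p_x(8n)/n + 192 p_x(8n) p_x(3n)/n² and p_T(n) ≤ 12 p_x(8n)/n + 192 p_x(8n) p_x(3n)/n². -/
open scoped ENNReal Pointwise

universe u

variable {A : Type u}

/-- The factor of `x` of length `n` starting at position `i`. -/
def wordSeg (x : ℕ → A) (i n : ℕ) : List A := (List.range n).map fun j => x (i + j)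

/-- The set of finite factors of a one-sided infinite word (including the empty word). -/
def Fac (x : ℕ → A) : Set (List A) := {u | ∃ i n, u = wordSeg x i n}

/-- The factor of a two-sided word `x` of length `n` starting at position `i`. -/
def wordSegZ (x : ℤ → A) (i : ℤ) (n : ℕ) : List A := (List.range n).map fun j => x (i + j)

/-- The set of finite factors of a two-sided infinite word (including the empty word). -/
def FacZ (x : ℤ → A) : Set (List A) := {u | ∃ (i : ℤ) (n : ℕ), u = wordSegZ x i n}

/-- The complexity of a language: the number of words of length `n` in it. -/
noncomputable def complexity (L : Set (List A)) (n : ℕ) : ℕ :=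
  {u ∈ L | u.length = n}.ncard

/-- The accumulative complexity `p*_L(n) = Σ_{i=0}^{n} p_L(i)`. -/
noncomputable def accComplexity (L : Set (List A)) (n : ℕ) : ℕ :=
  ∑ i ∈ Finset.range (n + 1), complexity L i

/-- Concatenation (product) of two languages. -/
def prodL (S T : Set (List A)) : Set (List A) := {w | ∃ s ∈ S, ∃ t ∈ T, w = s ++ t}

/-- `powL S k` = `S^k`, the set of concatenations of `k` elements of `S`. -/
def powL (S : Set (List A)) : ℕ → Set (List A)
  | 0 => {([] : List A)}
  | k + 1 => prodL (powL S k) S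

/-- `f(n) = O(n^α)`. -/
def PolyBound (f : ℕ → ℕ) (α : ℝ) : Prop :=
  ∃ C : ℝ, ∀ n : ℕ, 1 ≤ n → (f n : ℝ) ≤ C * (n : ℝ) ^ α

/-- The `α`-dimension `d_α(L)`: infimum of the integers `k ≥ 1` such that `L ⊆ S^k`
for some language `S` with `p_S(n) = O(n^α)`, with `inf ∅ = ⊤`. -/
noncomputable def polyDim (α : ℝ) (L : Set (List A)) : ℕ∞ :=
  sInf {k : ℕ∞ | ∃ m : ℕ, k = m ∧ 1 ≤ m ∧
    ∃ S : Set (List A), PolyBound (complexity S) α ∧ L ⊆ powL S m}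

/-- The accumulative `α`-dimension `d*_α(L)`. -/
noncomputable def polyDimStar (α : ℝ) (L : Set (List A)) : ℕ∞ :=
  sInf {k : ℕ∞ | ∃ m : ℕ, k = m ∧ 1 ≤ m ∧
    ∃ S : Set (List A), PolyBound (accComplexity S) α ∧ L ⊆ powL S m}

/-- The cost `c(L)`: infimum of the `α ≥ 0` with `d_α(L) < +∞`, with `inf ∅ = ⊤`. -/
noncomputable def cost (L : Set (List A)) : ℝ≥0∞ :=
  sInf {a : ℝ≥0∞ | ∃ α : ℝ, 0 ≤ α ∧ a = ENNReal.ofReal α ∧ polyDim α L ≠ ⊤}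

/-- A one-sided word is ultimately periodic if it is of the form `u v v v ⋯`. -/
def UltimatelyPeriodic (x : ℕ → A) : Prop :=
  ∃ N p : ℕ, 0 < p ∧ ∀ n : ℕ, N ≤ n → x (n + p) = x n

/-- A two-sided word is eventually periodic if it is periodic far enough to the right
and far enough to the left. -/
def EventuallyPeriodicZ (x : ℤ → A) : Prop :=
  (∃ p : ℕ, 0 < p ∧ ∃ N : ℤ, ∀ n : ℤ, N ≤ n → x (n + p) = x n) ∧
  (∃ p : ℕ, 0 < p ∧ ∃ N : ℤ, ∀ n : ℤ, n ≤ N → x (n - p) = x n)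

/-- A one-sided word is recurrent if each of its factors occurs infinitely often. -/
def Recurrent (x : ℕ → A) : Prop :=
  ∀ u ∈ Fac x, ∀ N : ℕ, ∃ i : ℕ, N ≤ i ∧ u = wordSeg x i u.length

/-- `u` is a right special factor for the language `F`. -/
def RightSpecial (F : Set (List A)) (u : List A) : Prop :=
  u ∈ F ∧ ∃ a b : A, a ≠ b ∧ u ++ [a] ∈ F ∧ u ++ [b] ∈ F

/-- `M` is a `D`-marker set for a word with factor set `F`: every factor of length
at least `D n` contains a factor of length `n` belonging to `M`. -/
def MarkerSet (D : ℕ) (M F : Set (List A)) : Prop :=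
  ∀ n : ℕ, 1 ≤ n → ∀ u ∈ F, D * n ≤ u.length →
    ∃ v ∈ M, v.length = n ∧ v <:+: u

/-- A language is factorial if it contains all factors of its members. -/
def IsFactorial (S : Set (List A)) : Prop := ∀ u ∈ S, ∀ v : List A, v <:+: u → v ∈ S

/-- The bound `Σ_{k ∈ I_n ∩ ℕ} p_M(2^k)(1 + 4 p(3n)/2^k)` where
`I_n = (log₂(n/(2D)), log₂(2n)]`, i.e. the sum is over natural `k` with
`n/(2D) < 2^k ≤ 2n`. -/
noncomputable def markerBound (M F : Set (List A)) (D n : ℕ) : ℝ :=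
  ∑ k ∈ (Finset.range (2 * n + 2)).filter (fun k => n < 2 * D * 2 ^ k ∧ 2 ^ k ≤ 2 * n),
    (complexity M (2 ^ k) : ℝ) * (1 + 4 * (complexity F (3 * n) : ℝ) / 2 ^ k)

-- The word `u = ∏_{i=1}^{∞} a b^i = a b a b b a b b b ⋯` over `{a,b}`, with
-- `a = false`, `b = true`: position `n` carries an `a` iff `n = (i-1)(i+2)/2` for some
-- `i ≥ 1`, i.e. iff `2n = m(m+3)` for some `m ≥ 0`.
open Classical in
noncomputable def uWord (n : ℕ) : Bool :=
  if ∃ m : ℕ, 2 * n = m * (m + 3) then false else true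

/-!
A word aperiodic to the right has at least `m` factors of length `4 * m` containing a given factor
of length `3 * m` (Morse–Hedlund). Adding markers of length `m` one at a time, each far from all
occurrences of the previous ones, therefore stops after at most `p (4 * m) / m` steps, and then
every factor of length `3 * m` contains a marker.

A factor `u` of `x` is cut at the center of an occurrence in `u` of a marker `v` whose length is the
largest power of two `2 * h` for which `u` is sure to contain one. The occurrence is chosen at an
end of a run of the least period of `v`; if the run reaches both ends of `u`, its content is
determined by `v`. Otherwise two occurrences at distance less than `h` cannot sit at the same end
of a run, so that placing the cut window at `h` different offsets in longer factors gives distinct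
factors: there are at most `p (3 * n) / h` windows of each kind. Summing over the markers of all
dyadic lengths comparable to `n` gives geometric series.

A recurrent one-sided word is extended to the left without changing its factors by taking a limit
of its shifts along an ultrafilter.
-/

/-! ## Segments of two-sided words -/

section Segments

variable {x y : ℤ → A} {i j k k' : ℤ} {m n : ℕ}

-- In `wordSegZ` the list `List.range n` is coerced to `List ℤ` through the list monad.
theorem wordSegZ_eq_map (x : ℤ → A) (i : ℤ) (n : ℕ) :
    wordSegZ x i n = (List.range n).map fun r : ℕ => x (i + r) := by
  simp only [wordSegZ, List.pure_def, List.bind_eq_flatMap, ← List.map_eq_flatMap, List.map_map,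
    Function.comp_def]

@[simp]
theorem length_wordSegZ (x : ℤ → A) (i : ℤ) (n : ℕ) : (wordSegZ x i n).length = n := by
  simp [wordSegZ_eq_map]

theorem getElem?_wordSegZ (x : ℤ → A) (i : ℤ) {r : ℕ} (hr : r < n) :
    (wordSegZ x i n)[r]? = some (x (i + r)) := by
  simp [wordSegZ_eq_map, hr]

theorem wordSegZ_add (x : ℤ → A) (i : ℤ) (m n : ℕ) :
    wordSegZ x i (m + n) = wordSegZ x i m ++ wordSegZ x (i + m) n := by
  simp [wordSegZ_eq_map, List.range_add, Function.comp_def, add_assoc]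

theorem take_wordSegZ (x : ℤ → A) (i : ℤ) (h : m ≤ n) :
    (wordSegZ x i n).take m = wordSegZ x i m := by
  simp [wordSegZ_eq_map, ← List.map_take, List.take_range, h]

theorem drop_wordSegZ (x : ℤ → A) (i : ℤ) (m n : ℕ) :
    (wordSegZ x i (m + n)).drop m = wordSegZ x (i + m) n := by
  simp [wordSegZ_add]

theorem wordSegZ_eq_iff :
    wordSegZ x i n = wordSegZ y j n ↔ ∀ r : ℕ, r < n → x (i + r) = y (j + r) := by
  simp [wordSegZ_eq_map, List.map_inj_left]

theorem apply_eq_of_wordSegZ_eq (h : wordSegZ x i n = wordSegZ y j n) (hik : i ≤ k)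
    (hkn : k < i + n) (hk' : k' - j = k - i) : x k = y k' := by
  have := wordSegZ_eq_iff.1 h (k - i).toNat (by omega)
  rwa [show i + ((k - i).toNat : ℤ) = k by omega,
    show j + ((k - i).toNat : ℤ) = k' by omega] at this

theorem wordSegZ_eq_of_wordSegZ_eq (h : wordSegZ x i n = wordSegZ y j n) (hik : i ≤ k)
    (hkn : k + m ≤ i + n) (hk' : k' - j = k - i) : wordSegZ x k m = wordSegZ y k' m :=
  wordSegZ_eq_iff.2 fun r hr =>
    apply_eq_of_wordSegZ_eq h (by omega) (by omega) (by omega)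

theorem infix_wordSegZ_iff {v : List A} :
    v <:+: wordSegZ x i n ↔
      ∃ p, i ≤ p ∧ p + v.length ≤ i + n ∧ wordSegZ x p v.length = v := by
  constructor
  · rintro ⟨s, t, hst⟩
    have hlen : n = s.length + v.length + t.length := by
      simpa [add_assoc] using (congrArg List.length hst).symm
    refine ⟨i + s.length, by omega, by omega, ?_⟩
    rw [hlen, wordSegZ_add, wordSegZ_add] at hst
    have hsv := (List.append_inj hst (by simp)).1
    exact (List.append_inj hsv (by simp)).2.symm
  · rintro ⟨p, hip, hpn, hv⟩
    obtain ⟨a, ha⟩ := Int.eq_ofNat_of_zero_le (sub_nonneg.2 hip)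
    obtain ⟨b, hb⟩ := Int.eq_ofNat_of_zero_le (sub_nonneg.2 hpn)
    refine ⟨wordSegZ x i a, wordSegZ x (p + v.length) b, ?_⟩
    rw [show n = a + v.length + b by omega, wordSegZ_add, wordSegZ_add,
      show i + (a : ℤ) = p by omega, hv,
      show i + ((a + v.length : ℕ) : ℤ) = p + v.length by push_cast; omega]

theorem reverse_wordSegZ (x : ℤ → A) (i : ℤ) (n : ℕ) :
    (wordSegZ x i n).reverse = wordSegZ (fun k => x (-k)) (1 - i - n) n := by
  apply List.ext_getElem
  · simp
  · intro r hr _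
    simp only [List.length_reverse, length_wordSegZ] at hr
    simp only [wordSegZ_eq_map, List.getElem_reverse, List.getElem_map, List.getElem_range,
      List.length_map, List.length_range]
    congr 1
    omega

end Segments

/-! ## Complexity of languages -/

section Complexity

variable {x : ℤ → A} {n : ℕ}

theorem setOf_mem_facZ_length_eq (x : ℤ → A) (n : ℕ) :
    {u ∈ FacZ x | u.length = n} = Set.range fun i => wordSegZ x i n := by
  ext u
  constructor
  · rintro ⟨⟨i, k, rfl⟩, hk⟩
    exact ⟨i, by simpa using congrArg (wordSegZ x i) hk.symm⟩
  · rintro ⟨i, rfl⟩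
    exact ⟨⟨i, n, rfl⟩, length_wordSegZ x i n⟩

theorem complexity_facZ (x : ℤ → A) (n : ℕ) :
    complexity (FacZ x) n = (Set.range fun i => wordSegZ x i n).ncard := by
  rw [complexity, setOf_mem_facZ_length_eq]

theorem facZ_reverse (x : ℤ → A) : FacZ (fun k => x (-k)) = List.reverse '' FacZ x := by
  ext u
  constructor
  · rintro ⟨i, n, rfl⟩
    refine ⟨_, ⟨1 - i - n, n, rfl⟩, ?_⟩
    rw [reverse_wordSegZ]
    congr 1
    omega
  · rintro ⟨_, ⟨i, n, rfl⟩, rfl⟩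
    exact ⟨_, n, reverse_wordSegZ x i n⟩

theorem complexity_image_reverse (L : Set (List A)) (n : ℕ) :
    complexity (List.reverse '' L) n = complexity L n := by
  have himage : {u ∈ List.reverse '' L | u.length = n} =
      List.reverse '' {u ∈ L | u.length = n} := by
    ext u
    simp only [Set.mem_image, Set.mem_ofPred_eq]
    constructor
    · rintro ⟨⟨w, hw, rfl⟩, hlen⟩
      exact ⟨w, ⟨hw, by simpa using hlen⟩, rfl⟩
    · rintro ⟨w, ⟨hw, hlen⟩, rfl⟩
      exact ⟨⟨w, hw, rfl⟩, by simpa using hlen⟩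
  rw [complexity, complexity, himage, Set.ncard_image_of_injective _ List.reverse_injective]

variable [Finite A]

theorem finite_image_wordSegZ (x : ℤ → A) (n : ℕ) (f : ℤ → ℤ) (C : Set ℤ) :
    ((fun c => wordSegZ x (f c) n) '' C).Finite :=
  (List.finite_length_eq A n).subset <| by
    rintro _ ⟨c, -, rfl⟩
    exact length_wordSegZ x (f c) n

theorem finite_range_wordSegZ (x : ℤ → A) (n : ℕ) :
    (Set.range fun i => wordSegZ x i n).Finite := by
  simpa using finite_image_wordSegZ x n id Set.univ

theorem complexity_facZ_mono (x : ℤ → A) : Monotone (complexity (FacZ x)) := by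
  intro m n hmn
  have himage : Set.range (fun i => wordSegZ x i m) =
      List.take m '' Set.range fun i => wordSegZ x i n := by
    simp only [← Set.range_comp, Function.comp_def, take_wordSegZ x _ hmn]
  rw [complexity_facZ, complexity_facZ, himage]
  exact Set.ncard_image_le (finite_range_wordSegZ x n)

end Complexity

/-! ## Aperiodicity and factor counts -/

section Aperiodicity

variable {x : ℤ → A} {N : ℤ} {m n : ℕ}

/-- No tail of `x` going to the right is periodic. Together with its mirror image this splits
the aperiodicity of a two-sided word into two cases. -/
def RightAperiodic (x : ℤ → A) : Prop :=
  ¬ ∃ p : ℕ, 0 < p ∧ ∃ N : ℤ, ∀ n : ℤ, N ≤ n → x (n + p) = x n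

theorem rightAperiodic_or_of_not_eventuallyPeriodicZ (hx : ¬ EventuallyPeriodicZ x) :
    RightAperiodic x ∨ RightAperiodic fun k => x (-k) := by
  refine (not_and_or.1 hx).imp_right (mt ?_)
  rintro ⟨p, hp, N, hN⟩
  refine ⟨p, hp, -N, fun n hn => ?_⟩
  simpa [sub_eq_add_neg, add_comm] using hN (-n) (by omega)

variable [Finite A]

theorem RightAperiodic.exists_branch (hx : RightAperiodic x) (N : ℤ) (n : ℕ) :
    ∃ i ≥ N, ∃ j ≥ N, wordSegZ x i n = wordSegZ x j n ∧
      wordSegZ x i (n + 1) ≠ wordSegZ x j (n + 1) := by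
  by_contra! hdet
  obtain ⟨a, ha, b, hb, hab, heq⟩ : ∃ a ∈ Set.Ici N, ∃ b ∈ Set.Ici N,
      a < b ∧ wordSegZ x a n = wordSegZ x b n := by
    obtain ⟨a, ha, b, hb, hne, heq⟩ :=
      (Set.Ici_infinite N).exists_ne_map_eq_of_mapsTo
        (Set.mapsTo_image (fun i => wordSegZ x i n) _) (finite_image_wordSegZ x n id _)
    rcases lt_or_gt_of_ne hne with hab | hab
    · exact ⟨a, ha, b, hb, hab, heq⟩
    · exact ⟨b, hb, a, ha, hab, heq.symm⟩
  simp only [Set.mem_Ici] at ha hb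
  have hshift (k : ℕ) : wordSegZ x (a + k) n = wordSegZ x (b + k) n := by
    induction k with
    | zero => simpa using heq
    | succ k ih =>
      exact wordSegZ_eq_of_wordSegZ_eq (hdet _ (by omega) _ (by omega) ih)
        (by omega) (by omega) (by omega)
  refine hx ⟨(b - a).toNat, by omega, a + n, fun c hc => ?_⟩
  have hext := hdet _ (by omega) _ (by omega) (hshift (c - a - n).toNat)
  exact (apply_eq_of_wordSegZ_eq hext (by omega) (by omega) (by omega)).symm

-- The Morse–Hedlund argument, applied to the factors occurring at positions `≥ N`.
theorem RightAperiodic.lt_ncard_tail_factors (hx : RightAperiodic x) (N : ℤ) (n : ℕ) :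
    n < ((fun i => wordSegZ x i n) '' Set.Ici N).ncard := by
  have hfin (n : ℕ) : ((fun i => wordSegZ x i n) '' Set.Ici N).Finite :=
    finite_image_wordSegZ x n id _
  induction n with
  | zero => exact (Set.ncard_pos (hfin 0)).2 (Set.nonempty_Ici.image _)
  | succ n ih =>
    have himage : (fun i => wordSegZ x i n) '' Set.Ici N =
        List.take n '' ((fun i => wordSegZ x i (n + 1)) '' Set.Ici N) := by
      simp only [Set.image_image, take_wordSegZ x _ n.le_succ]
    obtain ⟨i, hi, j, hj, heq, hne⟩ := hx.exists_branch N n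
    have hlt : ((fun i => wordSegZ x i n) '' Set.Ici N).ncard <
        ((fun i => wordSegZ x i (n + 1)) '' Set.Ici N).ncard := by
      rw [himage]
      refine (Set.ncard_image_le (hfin (n + 1))).lt_of_ne fun hcard => hne ?_
      refine Set.injOn_of_ncard_image_eq hcard (hfin (n + 1)) ⟨i, hi, rfl⟩ ⟨j, hj, rfl⟩ ?_
      rwa [take_wordSegZ x _ n.le_succ, take_wordSegZ x _ n.le_succ]
    omega

theorem ncard_image_Ioc {β : Type*} {f : ℤ → β} {a : ℤ} (hf : Set.InjOn f (Set.Ioc (a - m) a)) :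
    (f '' Set.Ioc (a - m) a).ncard = m := by
  rw [hf.ncard_image, Set.ncard_eq_toFinset_card', Set.toFinset_Ioc, Int.card_Ioc]
  omega

-- Either the occurrences of the factor are syndetic, and the Morse–Hedlund bound applies, or some
-- occurrence is followed by a long gap, and sliding a window over it gives distinct factors.
theorem RightAperiodic.le_ncard_factors_containing (hx : RightAperiodic x) (p₀ : ℤ) (m n : ℕ) :
    m ≤ ((fun i => wordSegZ x i (n + m)) ''
      {i | ∃ p, i ≤ p ∧ p ≤ i + m ∧ wordSegZ x p n = wordSegZ x p₀ n}).ncard := by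
  set P : Set ℤ := {i | ∃ p, i ≤ p ∧ p ≤ i + m ∧ wordSegZ x p n = wordSegZ x p₀ n}
  have hfin : ((fun i => wordSegZ x i (n + m)) '' P).Finite := finite_image_wordSegZ x _ id _
  by_cases hsynd : Set.Ici p₀ ⊆ P
  · have := hx.lt_ncard_tail_factors p₀ (n + m)
    have := Set.ncard_le_ncard (Set.image_mono (f := fun i => wordSegZ x i (n + m)) hsynd) hfin
    omega
  · obtain ⟨i, hi, hgap⟩ := Set.not_subset.1 hsynd
    obtain ⟨p, ⟨hpi, hp⟩, hlast⟩ := Int.exists_greatest_of_bdd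
      (P := fun p => p ≤ i ∧ wordSegZ x p n = wordSegZ x p₀ n) ⟨i, fun _ h => h.1⟩ ⟨p₀, hi, rfl⟩
    have hnone (q : ℤ) (hpq : p < q) (hqm : q ≤ p + m) :
        wordSegZ x q n ≠ wordSegZ x p₀ n := by
      intro hq
      rcases le_or_gt q i with hqi | hqi
      · exact (hlast q ⟨hqi, hq⟩).not_gt hpq
      · exact hgap ⟨q, by omega, by omega, hq⟩
    have hsub : Set.Ioc (p - m) p ⊆ P := fun i hi => ⟨p, hi.2, by linarith [hi.1], hp⟩
    have hlt (i : ℤ) (hi : i ∈ Set.Ioc (p - m) p) (j : ℤ) (hj : j ∈ Set.Ioc (p - m) p)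
        (heq : wordSegZ x i (n + m) = wordSegZ x j (n + m)) : ¬ i < j := by
      intro hij
      have hi' := hi.1
      have hj' := hj.2
      refine hnone (p + (j - i)) (by omega) (by omega) ?_
      rw [← hp]
      exact (wordSegZ_eq_of_wordSegZ_eq heq hi.2 (by push_cast; omega) (by omega)).symm
    have hinj : Set.InjOn (fun i => wordSegZ x i (n + m)) (Set.Ioc (p - m) p) :=
      fun i hi j hj heq =>
        le_antisymm (not_lt.1 (hlt j hj i hi heq.symm)) (not_lt.1 (hlt i hi j hj heq))
    exact (ncard_image_Ioc hinj).symm.le.trans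
      (Set.ncard_le_ncard (Set.image_mono hsub) hfin)

end Aperiodicity

/-! ## Marker sets with few words -/

section Markers

variable {x : ℤ → A} {M : Set (List A)} {m D : ℕ}

/-- The factors of `x` of length `4 * m` in which some word of `M`, a set of words of length `m`,
starts at an offset between `m` and `2 * m`. Their number bounds the size of a marker set built
greedily: each new marker brings at least `m` new factors. -/
def centeredFactors (x : ℤ → A) (m : ℕ) (M : Set (List A)) : Set (List A) :=
  (fun i => wordSegZ x i (4 * m)) '' {i | ∃ j, i + m ≤ j ∧ j ≤ i + 2 * m ∧ wordSegZ x j m ∈ M}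

theorem MarkerSet.image_reverse {F : Set (List A)} (hM : MarkerSet D M F) :
    MarkerSet D (List.reverse '' M) (List.reverse '' F) := by
  rintro n hn _ ⟨u, hu, rfl⟩ hlen
  obtain ⟨v, hv, rfl, hvu⟩ := hM n hn u hu (by simpa using hlen)
  exact ⟨v.reverse, ⟨v, hv, rfl⟩, List.length_reverse, List.reverse_infix.2 hvu⟩

variable [Finite A]

theorem ncard_centeredFactors_le (x : ℤ → A) (m : ℕ) (M : Set (List A)) :
    (centeredFactors x m M).ncard ≤ complexity (FacZ x) (4 * m) := by
  rw [complexity_facZ]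
  exact Set.ncard_le_ncard (Set.image_subset_range _ _) (finite_range_wordSegZ x _)

theorem RightAperiodic.ncard_centeredFactors_add_le (hx : RightAperiodic x) {p : ℤ}
    (hp : ∀ j, p - m ≤ j → j ≤ p + m → wordSegZ x j m ∉ M) :
    (centeredFactors x m M).ncard + m ≤
      (centeredFactors x m (insert (wordSegZ x p m) M)).ncard := by
  have hfin (M : Set (List A)) : (centeredFactors x m M).Finite :=
    finite_image_wordSegZ x _ id _
  set W := (fun i => wordSegZ x i (4 * m)) ''
    {i | ∃ q, i ≤ q ∧ q ≤ i + m ∧ wordSegZ x q (3 * m) = wordSegZ x (p - m) (3 * m)}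
  have hWcard : m ≤ W.ncard := by
    simpa only [show 3 * m + m = 4 * m by omega] using
      hx.le_ncard_factors_containing (p - m) m (3 * m)
  have hWfin : W.Finite := finite_image_wordSegZ x _ id _
  have hWsub : W ⊆ centeredFactors x m (insert (wordSegZ x p m) M) := by
    rintro _ ⟨i, ⟨q, hiq, hqi, hq⟩, rfl⟩
    exact ⟨i, ⟨q + m, by omega, by omega, Or.inl <|
      wordSegZ_eq_of_wordSegZ_eq hq (by omega) (by push_cast; omega) (by omega)⟩, rfl⟩
  have hMsub : centeredFactors x m M ⊆ centeredFactors x m (insert (wordSegZ x p m) M) :=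
    Set.image_mono fun _ ⟨j, hij, hji, hj⟩ => ⟨j, hij, hji, Or.inr hj⟩
  have hdisj : Disjoint (centeredFactors x m M) W := by
    rw [Set.disjoint_left]
    rintro _ ⟨i', ⟨j, hij, hji, hj⟩, rfl⟩ ⟨i, ⟨q, hiq, hqi, hq⟩, heq⟩
    have hj_eq : wordSegZ x j m = wordSegZ x (j - i' + i) m :=
      (wordSegZ_eq_of_wordSegZ_eq heq (by omega) (by push_cast; omega) (by omega)).symm
    have hshift_eq : wordSegZ x (j - i' + i) m = wordSegZ x (j - i' + i - q + p - m) m :=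
      wordSegZ_eq_of_wordSegZ_eq hq (by omega) (by push_cast; omega) (by omega)
    exact hp _ (by omega) (by omega) (hshift_eq ▸ hj_eq ▸ hj)
  calc (centeredFactors x m M).ncard + m
      ≤ (centeredFactors x m M).ncard + W.ncard := by gcongr
    _ = (centeredFactors x m M ∪ W).ncard := (Set.ncard_union_eq hdisj (hfin M) hWfin).symm
    _ ≤ _ := Set.ncard_le_ncard (Set.union_subset hMsub hWsub) (hfin _)

theorem RightAperiodic.exists_markers (hx : RightAperiodic x) (m : ℕ) :
    ∃ M : Set (List A), M.Finite ∧ m * M.ncard ≤ complexity (FacZ x) (4 * m) ∧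
      ∀ p : ℤ, ∃ j, p - m ≤ j ∧ j ≤ p + m ∧ wordSegZ x j m ∈ M := by
  have hfin : {v : List A | v.length = m}.Finite := List.finite_length_eq A m
  obtain ⟨M, ⟨hMlen, hMcard⟩, hmax⟩ := Set.Finite.exists_maximal
    (s := {M | M ⊆ {v : List A | v.length = m} ∧ m * M.ncard ≤ (centeredFactors x m M).ncard})
    (hfin.finite_subsets.subset fun _ h => h.1) ⟨∅, by simp⟩
  refine ⟨M, hfin.subset hMlen, hMcard.trans (ncard_centeredFactors_le x m M), ?_⟩
  by_contra! hgap
  obtain ⟨p, hp⟩ := hgap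
  have hpM : wordSegZ x p m ∉ M := hp p (by omega) (by omega)
  refine hpM (hmax ⟨?_, ?_⟩ (Set.subset_insert _ M) (Set.mem_insert _ M))
  · exact Set.insert_subset (length_wordSegZ x p m) hMlen
  · rw [Set.ncard_insert_of_notMem hpM (hfin.subset hMlen), mul_add_one]
    exact (Nat.add_le_add_right hMcard m).trans (hx.ncard_centeredFactors_add_le hp)

theorem RightAperiodic.exists_markerSet (hx : RightAperiodic x) :
    ∃ M, MarkerSet 3 M (FacZ x) ∧ ∀ n, n * complexity M n ≤ complexity (FacZ x) (4 * n) := by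
  choose M hMfin hMcard hM using hx.exists_markers
  refine ⟨{v | v ∈ M v.length}, ?_, fun n => ?_⟩
  · rintro n - _ ⟨i, l, rfl⟩ hl
    rw [length_wordSegZ] at hl
    obtain ⟨j, hij, hji, hj⟩ := hM n (i + n)
    refine ⟨wordSegZ x j n, by simpa using hj, length_wordSegZ x j n, ?_⟩
    rw [infix_wordSegZ_iff]
    exact ⟨j, by omega, by simp; omega, by simp⟩
  · have hsub : {v ∈ {v | v ∈ M v.length} | v.length = n} ⊆ M n := by
      rintro v ⟨hv, rfl⟩
      exact hv
    refine (Nat.mul_le_mul_left n ?_).trans (hMcard n)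
    exact Set.ncard_le_ncard hsub (hMfin n)

theorem exists_markerSet_of_not_eventuallyPeriodicZ (hx : ¬ EventuallyPeriodicZ x) :
    ∃ M, MarkerSet 3 M (FacZ x) ∧ ∀ n, n * complexity M n ≤ complexity (FacZ x) (4 * n) := by
  rcases rightAperiodic_or_of_not_eventuallyPeriodicZ hx with hright | hleft
  · exact hright.exists_markerSet
  · obtain ⟨M, hM, hcard⟩ := hleft.exists_markerSet
    refine ⟨List.reverse '' M, ?_, ?_⟩
    · simpa [facZ_reverse, Set.image_image] using hM.image_reverse
    · simpa only [facZ_reverse, complexity_image_reverse] using hcard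

end Markers

/-! ## Local periods -/

section Periods

variable {x y : ℤ → A} {a b c d i j s s' : ℤ} {m n p q : ℕ} {v : List A}

/-- The restriction of `x` to the positions in `[a, b)` has period `p`. -/
def PeriodicOn (x : ℤ → A) (a b : ℤ) (p : ℕ) : Prop :=
  ∀ k, a ≤ k → k + p < b → x k = x (k + p)

theorem PeriodicOn.mono (h : PeriodicOn x a b p) (hac : a ≤ c) (hdb : d ≤ b) :
    PeriodicOn x c d p :=
  fun k hck hkd => h k (hac.trans hck) (hkd.trans_le hdb)

theorem PeriodicOn.union (h₁ : PeriodicOn x a b p) (h₂ : PeriodicOn x c d p)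
    (hcb : c + p ≤ b) : PeriodicOn x a d p := by
  intro k hak hkd
  rcases lt_or_ge (k + p) b with hkb | hbk
  · exact h₁ k hak hkb
  · exact h₂ k (by omega) hkd

theorem periodicOn_comp_neg_iff :
    PeriodicOn (fun k => x (-k)) (1 - b) (1 - a) p ↔ PeriodicOn x a b p := by
  constructor <;> intro h k hk hkp
  · have := h (-(k + p)) (by omega) (by omega)
    simpa [add_comm, eq_comm] using this
  · have := h (-(k + p)) (by omega) (by omega)
    rwa [neg_add_rev, neg_add_cancel_comm, ← neg_add_rev, eq_comm] at this

theorem hasPeriod_wordSegZ_iff : (wordSegZ x i n).HasPeriod p ↔ PeriodicOn x i (i + n) p := by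
  rw [List.hasPeriod_iff_getElem?, length_wordSegZ]
  constructor
  · intro h k hik hkn
    have hr := h (k - i).toNat (by omega)
    rw [getElem?_wordSegZ x i (by omega), getElem?_wordSegZ x i (by omega), Option.some_inj] at hr
    convert hr using 2 <;> omega
  · intro h r hr
    rw [getElem?_wordSegZ x i (by omega), getElem?_wordSegZ x i (by omega), h _ (by omega)
      (by omega)]
    push_cast
    rw [add_assoc]

theorem periodicOn_iff_wordSegZ_eq :
    PeriodicOn x i (i + n + p) p ↔ wordSegZ x i n = wordSegZ x (i + p) n := by
  refine ⟨fun h => wordSegZ_eq_iff.2 fun r hr => ?_, fun h k hik hkn => ?_⟩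
  · rw [h _ (by omega) (by omega), add_right_comm]
  · exact apply_eq_of_wordSegZ_eq h hik (by omega) (by omega)

-- A word with period `q` is determined by any of its factors of length at least `q`: equality
-- spreads from that factor one position at a time in both directions.
theorem PeriodicOn.wordSegZ_eq (hx : PeriodicOn x i (i + n) q) (hy : PeriodicOn y j (j + n) q)
    (hq : 0 < q) (hqm : q ≤ m) (his : i ≤ s) (hsn : s + m ≤ i + n) (hs : s' - j = s - i)
    (heq : wordSegZ x s m = wordSegZ y s' m) : wordSegZ x i n = wordSegZ y j n := by
  have hspread (r : ℕ) : ∀ k, s - r ≤ k → k < s + m + r → i ≤ k → k < i + n →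
      x k = y (k + (j - i)) := by
    induction r with
    | zero =>
      intro k hsk hkm _ _
      exact apply_eq_of_wordSegZ_eq heq (by omega) (by omega) (by omega)
    | succ r ih =>
      intro k hsk hkm hik hkn
      rcases lt_or_ge k (s - r) with hk | hk
      · rw [hx k hik (by omega), hy (k + (j - i)) (by omega) (by omega),
          ih (k + q) (by omega) (by omega) (by omega) (by omega), add_right_comm]
      rcases lt_or_ge k (s + m + r) with hk' | hk'
      · exact ih k hk hk' hik hkn
      · have hxk := hx (k - q) (by omega) (by omega)
        have hyk := hy (k - q + (j - i)) (by omega) (by omega)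
        rw [add_right_comm, sub_add_cancel] at hyk
        rw [sub_add_cancel] at hxk
        rw [← hxk, ← hyk]
        exact ih (k - q) (by omega) (by omega) (by omega) (by omega)
  refine wordSegZ_eq_iff.2 fun r hr => ?_
  rw [hspread n (i + r) (by omega) (by omega) (by omega) (by omega)]
  congr 1
  omega

theorem PeriodicOn.right_or_exists_end (h : PeriodicOn x i (i + n) q) (hq : 0 < q) (hqn : q ≤ n)
    (hib : i + n ≤ b) :
    PeriodicOn x i b q ∨ ∃ j, i ≤ j ∧ j + n ≤ b ∧ wordSegZ x j n = wordSegZ x i n ∧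
      ¬ PeriodicOn x j (j + n + q) q := by
  obtain ⟨j, ⟨hij, hjb, hj, hper⟩, hmax⟩ := Int.exists_greatest_of_bdd
    (P := fun j => i ≤ j ∧ j + n ≤ b ∧ wordSegZ x j n = wordSegZ x i n ∧
      PeriodicOn x i (j + n) q) ⟨b, fun _ hj => by omega⟩ ⟨i, le_rfl, hib, rfl, h⟩
  rw [or_iff_not_imp_right]
  intro hnone
  have hext : PeriodicOn x j (j + n + q) q := by
    by_contra hext
    exact hnone ⟨j, hij, hjb, hj, hext⟩
  have hper' : PeriodicOn x i (j + n + q) q := hper.union hext (by omega)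
  have hexit : b < j + n + q := by
    by_contra! hroom
    have := hmax (j + q) ⟨by omega, by omega, ?_, hper'.mono le_rfl (by omega)⟩
    · omega
    · rwa [← periodicOn_iff_wordSegZ_eq.1 hext]
  exact hper'.mono le_rfl hexit.le

theorem PeriodicOn.left_or_exists_end (h : PeriodicOn x i (i + n) q) (hq : 0 < q) (hqn : q ≤ n)
    (hai : a ≤ i) :
    PeriodicOn x a (i + n) q ∨ ∃ j, a ≤ j ∧ j ≤ i ∧ wordSegZ x j n = wordSegZ x i n ∧
      ¬ PeriodicOn x (j - q) (j + n) q := by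
  have hneg : PeriodicOn (fun k => x (-k)) (1 - i - n) (1 - i - n + n) q := by
    rw [sub_add_cancel, sub_sub]
    exact periodicOn_comp_neg_iff.2 h
  refine (hneg.right_or_exists_end hq hqn (b := 1 - a) (by omega)).imp ?_ ?_
  · rw [sub_sub]
    exact periodicOn_comp_neg_iff.1
  · rintro ⟨j, hij, hja, hj, hend⟩
    refine ⟨1 - j - n, by omega, by omega, List.reverse_injective ?_, fun hper => hend ?_⟩
    · rw [reverse_wordSegZ, reverse_wordSegZ, ← hj]
      congr 1
      omega
    · convert periodicOn_comp_neg_iff.2 hper using 1 <;> omega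

/-- The least positive period of `v`. -/
noncomputable def minPeriod (v : List A) : ℕ := sInf {p | 0 < p ∧ v.HasPeriod p}

theorem minPeriod_le (hp : 0 < p) (hv : v.HasPeriod p) : minPeriod v ≤ p :=
  Nat.sInf_le ⟨hp, hv⟩

theorem minPeriod_spec (v : List A) : 0 < minPeriod v ∧ v.HasPeriod (minPeriod v) :=
  Nat.sInf_mem (s := {p | 0 < p ∧ v.HasPeriod p})
    ⟨v.length + 1, v.length.succ_pos, v.hasPeriod_of_length_le _ v.length.le_succ⟩

theorem minPeriod_le_of_wordSegZ_eq (h : wordSegZ x i n = v) (hn : 0 < n) : minPeriod v ≤ n :=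
  minPeriod_le hn (v.hasPeriod_of_length_le _ (h ▸ (length_wordSegZ x i n).le))

theorem periodicOn_minPeriod (h : wordSegZ x i n = v) : PeriodicOn x i (i + n) (minPeriod v) :=
  hasPeriod_wordSegZ_iff.1 (h ▸ (minPeriod_spec v).2)

theorem minPeriod_le_of_close (hi : wordSegZ x i n = v) (hid : wordSegZ x (i + p) n = v)
    (hp : 0 < p) : minPeriod v ≤ p := by
  have hper : PeriodicOn x i (i + n + p) p := periodicOn_iff_wordSegZ_eq.2 (hi.trans hid.symm)
  refine minPeriod_le hp (hi ▸ hasPeriod_wordSegZ_iff.2 (hper.mono le_rfl (by omega)))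

theorem periodicOn_minPeriod_of_close (hi : wordSegZ x i n = v)
    (hid : wordSegZ x (i + p) n = v) (hp : 0 < p) (hpn : 2 * p ≤ n) :
    PeriodicOn x i (i + p + n) (minPeriod v) := by
  have := minPeriod_le_of_close hi hid hp
  exact (periodicOn_minPeriod hi).union (periodicOn_minPeriod hid) (by omega)

end Periods

/-! ## Cuts at the ends of periodic runs -/

section Cuts

variable {x : ℤ → A} {v : List A} {a i : ℤ} {h s t w l n : ℕ}

/-- The window `[a, a + s + t)` of `x` may be cut at `a + s`: an occurrence of the word `v`, of
length `2 * h`, is centered there, and either the least period of `v` is a period of the whole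
window, or it fails to extend by one more period beyond an end of that occurrence. These windows
have few contents, since the condition excludes two nearby cuts with equal contents. -/
def IsCut (x : ℤ → A) (v : List A) (h s t : ℕ) (a : ℤ) : Prop :=
  wordSegZ x (a + s - h) (2 * h) = v ∧
    (PeriodicOn x a (a + s + t) (minPeriod v) ∨
      ¬ PeriodicOn x (a + s - h - minPeriod v) (a + s + h) (minPeriod v) ∨
      ¬ PeriodicOn x (a + s - h) (a + s + h + minPeriod v) (minPeriod v))

theorem IsCut.length_eq (hcut : IsCut x v h s t a) : v.length = 2 * h := by
  rw [← hcut.1, length_wordSegZ]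

theorem IsCut.mono {s' t' : ℕ} {a' : ℤ} (hcut : IsCut x v h s t a) (hs : s' ≤ s) (ht : t' ≤ t)
    (ha : a' + s' = a + s) : IsCut x v h s' t' a' := by
  rw [IsCut, ha]
  exact ⟨hcut.1, hcut.2.imp_left fun hper => hper.mono (by omega) (by omega)⟩

theorem exists_isCut (hh : 0 < h) (hv : wordSegZ x i (2 * h) = v) (hai : a ≤ i)
    (hin : i + 2 * h ≤ a + n) :
    ∃ s t : ℕ, h ≤ s ∧ h ≤ t ∧ s + t = n ∧ IsCut x v h s t a := by
  set q := minPeriod v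
  have hcut (j : ℤ) (haj : a ≤ j) (hjn : j + 2 * h ≤ a + n) (hj : wordSegZ x j (2 * h) = v)
      (hper : PeriodicOn x a (a + n) q ∨ ¬ PeriodicOn x (j - q) (j + (2 * h : ℕ)) q ∨
        ¬ PeriodicOn x j (j + (2 * h : ℕ) + q) q) :
      ∃ s t : ℕ, h ≤ s ∧ h ≤ t ∧ s + t = n ∧ IsCut x v h s t a := by
    obtain ⟨s, rfl⟩ : ∃ s : ℕ, j = a + s - h := ⟨(j + h - a).toNat, by omega⟩
    obtain ⟨t, rfl⟩ : ∃ t : ℕ, n = s + t := ⟨n - s, by omega⟩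
    refine ⟨s, t, by omega, by omega, rfl, hj, ?_⟩
    rwa [Nat.cast_add, ← add_assoc, show a + s - h + (2 * h : ℕ) = a + s + h by omega] at hper
  have hq : 0 < q := (minPeriod_spec v).1
  have hqh : q ≤ 2 * h := minPeriod_le_of_wordSegZ_eq hv (by omega)
  have hper := periodicOn_minPeriod hv
  rcases hper.right_or_exists_end hq hqh (b := a + n) (by omega) with
    hright | ⟨j, hij, hjn, hj, hend⟩
  · rcases hper.left_or_exists_end hq hqh hai with hleft | ⟨j, haj, hji, hj, hend⟩
    · exact hcut i hai hin hv (Or.inl (hleft.union hright (by omega)))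
    · exact hcut j haj (by omega) (hj.trans hv) (Or.inr (Or.inl hend))
  · exact hcut j (by omega) (by omega) (hj.trans hv) (Or.inr (Or.inr hend))

variable [Finite A]

-- Sliding each window by fewer than `h` positions inside a factor of length `l` never produces
-- the same factor twice.
theorem mul_ncard_image_wordSegZ_le {C : Set ℤ} (hwl : w + h ≤ l)
    (hC : ∀ a ∈ C, ∀ b ∈ C, ∀ d : ℕ, 0 < d → d < h →
      wordSegZ x (a + d) w = wordSegZ x b w → wordSegZ x (b - d) w ≠ wordSegZ x a w) :
    h * ((fun a => wordSegZ x a w) '' C).ncard ≤ complexity (FacZ x) l := by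
  obtain ⟨R, hRC, hR⟩ := Set.exists_subset_bijOn C fun a => wordSegZ x a w
  have hlt (a : ℤ) (ha : a ∈ R) (b : ℤ) (hb : b ∈ R) (r r' : ℕ) (hr' : r' < h)
      (heq : wordSegZ x (a - r) l = wordSegZ x (b - r') l) : ¬ r < r' := fun hrr' =>
    hC a (hRC ha) b (hRC hb) (r' - r) (by omega) (by omega)
      (wordSegZ_eq_of_wordSegZ_eq heq (by omega) (by omega) (by omega))
      (wordSegZ_eq_of_wordSegZ_eq heq (by omega) (by omega) (by omega)).symm
  have hinj : Set.InjOn (fun z : ℤ × ℕ => wordSegZ x (z.1 - z.2) l) (R ×ˢ Set.Iio h) := by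
    rintro ⟨a, r⟩ ⟨ha, hr⟩ ⟨b, r'⟩ ⟨hb, hr'⟩ heq
    have hrr' : r = r' := le_antisymm (not_lt.1 (hlt b hb a ha r' r hr heq.symm))
      (not_lt.1 (hlt a ha b hb r r' hr' heq))
    subst hrr'
    have hab : a = b := hR.injOn ha hb
      (wordSegZ_eq_of_wordSegZ_eq heq (by omega) (by simp at hr; omega) (by omega))
    rw [hab]
  calc h * ((fun a => wordSegZ x a w) '' C).ncard
      = (R ×ˢ Set.Iio h).ncard := by
        rw [Set.ncard_prod, ← hR.image_eq, hR.injOn.ncard_image, Set.ncard_Iio_nat, mul_comm]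
    _ ≤ complexity (FacZ x) l := by
        rw [complexity_facZ]
        exact Set.ncard_le_ncard_of_injOn _ (fun z _ => ⟨_, rfl⟩) hinj (finite_range_wordSegZ x l)

theorem ncard_image_periodic_le_one (hh : 0 < h) (hhs : h ≤ s) (hht : h ≤ t) :
    ((fun a => wordSegZ x a (s + t)) '' {a | wordSegZ x (a + s - h) (2 * h) = v ∧
      PeriodicOn x a (a + s + t) (minPeriod v)}).ncard ≤ 1 := by
  refine (Set.ncard_le_one (finite_image_wordSegZ x (s + t) (fun a => a) _)).2 ?_
  rintro _ ⟨a, ⟨hva, hpa⟩, rfl⟩ _ ⟨b, ⟨hvb, hpb⟩, rfl⟩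
  have hq : minPeriod v ≤ 2 * h := minPeriod_le_of_wordSegZ_eq hva (by omega)
  rw [add_assoc, ← Nat.cast_add] at hpa hpb
  exact hpa.wordSegZ_eq hpb (minPeriod_spec v).1 hq (by omega) (by push_cast; omega) (by omega)
    (hva.trans hvb.symm)

theorem mul_ncard_image_leftBroken_le (hhs : h ≤ s) (hht : h ≤ t) (hl : s + t + h ≤ l) :
    h * ((fun a => wordSegZ x a (s + t)) '' {a | wordSegZ x (a + s - h) (2 * h) = v ∧
      ¬ PeriodicOn x (a + s - h - minPeriod v) (a + s + h) (minPeriod v)}).ncard ≤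
      complexity (FacZ x) l := by
  refine mul_ncard_image_wordSegZ_le hl fun a ha b hb d hd hdh _ heq => hb.2 ?_
  have hprev : wordSegZ x (b + s - h - d) (2 * h) = v :=
    (wordSegZ_eq_of_wordSegZ_eq heq (by omega) (by push_cast; omega) (by omega)).trans ha.1
  have := minPeriod_le_of_close hprev (by simpa using hb.1) hd
  exact (periodicOn_minPeriod_of_close hprev (by simpa using hb.1) hd (by omega)).mono (by omega)
    (by push_cast; omega)

theorem mul_ncard_image_rightBroken_le (hhs : h ≤ s) (hht : h ≤ t) (hl : s + t + h ≤ l) :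
    h * ((fun a => wordSegZ x a (s + t)) '' {a | wordSegZ x (a + s - h) (2 * h) = v ∧
      ¬ PeriodicOn x (a + s - h) (a + s + h + minPeriod v) (minPeriod v)}).ncard ≤
      complexity (FacZ x) l := by
  refine mul_ncard_image_wordSegZ_le hl fun a ha b hb d hd hdh heq _ => ha.2 ?_
  have hnext : wordSegZ x (a + s - h + d) (2 * h) = v :=
    (wordSegZ_eq_of_wordSegZ_eq heq (by omega) (by push_cast; omega) (by omega)).trans hb.1
  have := minPeriod_le_of_close ha.1 hnext hd
  exact (periodicOn_minPeriod_of_close ha.1 hnext hd (by omega)).mono (by omega)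
    (by push_cast; omega)

theorem mul_ncard_image_isCut_le (hh : 0 < h) (hhs : h ≤ s) (hht : h ≤ t) (hl : s + t + h ≤ l) :
    h * ((fun a => wordSegZ x a (s + t)) '' {a | IsCut x v h s t a}).ncard ≤
      h + 2 * complexity (FacZ x) l := by
  simp only [IsCut, and_or_left, Set.ofPred_or, Set.image_union]
  grw [Set.ncard_union_le, Set.ncard_union_le, mul_add, mul_add]
  have h1 := ncard_image_periodic_le_one (x := x) (v := v) hh hhs hht
  have h2 := mul_ncard_image_leftBroken_le (x := x) (v := v) hhs hht hl
  have h3 := mul_ncard_image_rightBroken_le (x := x) (v := v) hhs hht hl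
  nlinarith

end Cuts

/-! ## The factorization attached to a marker set -/

section Factorization

variable {x : ℤ → A} {M : Set (List A)} {a : ℤ} {D k n s t : ℕ}

/-- The window `[a, a + s + t)` of `x` may be cut at the center `a + s` of a marker of length
`2 ^ (k + 1)`, where `k` is large enough that only boundedly many values of `k` concern parts of
a given length. -/
def IsMarkedCut (x : ℤ → A) (M : Set (List A)) (D k s t : ℕ) (a : ℤ) : Prop :=
  2 ^ k ≤ s ∧ 2 ^ k ≤ t ∧ s + t < 2 * D * 2 ^ (k + 1) ∧ ∃ v ∈ M, IsCut x v (2 ^ k) s t a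

/-- The first language of the factorization of `FacZ x`: left parts of windows at marked cuts, and
the words too short to be cut. -/
def leftParts (x : ℤ → A) (M : Set (List A)) (D : ℕ) : Set (List A) :=
  {u | u.length < 2 * D} ∪ {u | ∃ k s t a, IsMarkedCut x M D k s t a ∧ u = wordSegZ x a s}

/-- The second language of the factorization of `FacZ x`: right parts of windows at marked cuts,
and the words too short to be cut. -/
def rightParts (x : ℤ → A) (M : Set (List A)) (D : ℕ) : Set (List A) :=
  {u | u.length < 2 * D} ∪ {u | ∃ k s t a, IsMarkedCut x M D k s t a ∧ u = wordSegZ x (a + s) t}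

theorem MarkerSet.pos (hM : MarkerSet D M (FacZ x)) : 0 < D := by
  by_contra! hD
  obtain ⟨v, -, hlen, hv⟩ := hM 1 le_rfl [] ⟨0, 0, rfl⟩ (by simp [hD])
  simp [List.infix_nil.1 hv] at hlen

theorem MarkerSet.exists_isMarkedCut (hM : MarkerSet D M (FacZ x)) (a : ℤ) (hn : 2 * D ≤ n) :
    ∃ k s t, s + t = n ∧ IsMarkedCut x M D k s t a := by
  have hD : 0 < D := hM.pos
  have hnD : 2 ≤ n / D := (Nat.le_div_iff_mul_le hD).2 hn
  obtain ⟨k, hk⟩ : ∃ k, Nat.log 2 (n / D) = k + 1 :=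
    Nat.exists_eq_succ_of_ne_zero (Nat.log_pos one_lt_two hnD).ne'
  have hle : D * 2 ^ (k + 1) ≤ n := by
    have := (Nat.le_div_iff_mul_le hD).1 (Nat.pow_log_le_self 2 (x := n / D) (by omega))
    rwa [hk, mul_comm] at this
  have hlt : n < 2 * D * 2 ^ (k + 1) := by
    have := (Nat.div_lt_iff_lt_mul hD).1 (Nat.lt_pow_succ_log_self one_lt_two (n / D))
    rw [hk] at this
    calc n < _ := this
      _ = _ := by rw [Nat.succ_eq_add_one]; ring
  obtain ⟨v, hvM, hv, hvx⟩ := hM (2 ^ (k + 1)) Nat.one_le_two_pow (wordSegZ x a n) ⟨a, n, rfl⟩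
    (by simpa using hle)
  obtain ⟨p, hap, hpn, hp⟩ := infix_wordSegZ_iff.1 hvx
  rw [hv, pow_succ'] at hp hpn
  obtain ⟨s, t, hs, ht, hst, hcut⟩ := exists_isCut (by positivity) hp hap (by exact_mod_cast hpn)
  exact ⟨k, s, t, hst, hs, ht, hst ▸ hlt, v, hvM, hcut⟩

theorem MarkerSet.facZ_subset_prodL (hM : MarkerSet D M (FacZ x)) :
    FacZ x ⊆ prodL (leftParts x M D) (rightParts x M D) := by
  rintro _ ⟨a, n, rfl⟩
  rcases lt_or_ge n (2 * D) with hn | hn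
  · exact ⟨wordSegZ x a n, Or.inl (by simpa using hn), [], Or.inl (by simpa using hM.pos),
      (List.append_nil _).symm⟩
  · obtain ⟨k, s, t, rfl, hcut⟩ := hM.exists_isMarkedCut a hn
    exact ⟨wordSegZ x a s, Or.inr ⟨k, s, t, a, hcut, rfl⟩, wordSegZ x (a + s) t,
      Or.inr ⟨k, s, t, a, hcut, rfl⟩, wordSegZ_add x a s t⟩

variable [Finite A]

theorem complexity_le_markerBound {L F : Set (List A)} (hn : 2 * D ≤ n)
    (G : ℕ → List A → Set (List A)) (hGfin : ∀ k v, (G k v).Finite)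
    (hG : ∀ k v, 2 ^ k ≤ n → 2 ^ (k + 1) * (G k v).ncard ≤
      2 ^ (k + 1) + 4 * complexity F (3 * n))
    (hL : ∀ u ∈ L, u.length = n → ∃ k, 2 ^ k ≤ n ∧ n < 2 * D * 2 ^ (k + 1) ∧
      ∃ v ∈ M, v.length = 2 ^ (k + 1) ∧ u ∈ G k v) :
    (complexity L n : ℝ) ≤ markerBound M F D n := by
  have hMfin (κ : ℕ) : {v ∈ M | v.length = 2 ^ κ}.Finite :=
    (List.finite_length_eq A _).subset fun _ hv => hv.2
  set K := {κ ∈ Finset.range (2 * n + 2) | n < 2 * D * 2 ^ κ ∧ 2 ^ κ ≤ 2 * n} with hK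
  have hsub : {u ∈ L | u.length = n} ⊆ ⋃ κ ∈ K, ⋃ v ∈ (hMfin κ).toFinset, G (κ - 1) v := by
    rintro u ⟨huL, hu⟩
    obtain ⟨k, hkn, hnk, v, hvM, hv, huG⟩ := hL u huL hu
    have hpow : 2 ^ (k + 1) ≤ 2 * n := by rw [pow_succ']; omega
    have hkK : k + 1 ∈ K := by
      have := (k + 1).lt_two_pow_self
      simp only [hK, Finset.mem_filter, Finset.mem_range]
      exact ⟨by omega, hnk, hpow⟩
    simp only [Set.mem_iUnion]
    exact ⟨k + 1, hkK, v, (hMfin _).mem_toFinset.2 ⟨hvM, hv⟩, huG⟩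
  have hcount (κ : ℕ) (hκ : κ ∈ K) (v : List A) :
      ((G (κ - 1) v).ncard : ℝ) ≤ 1 + 4 * (complexity F (3 * n) : ℝ) / 2 ^ κ := by
    simp only [hK, Finset.mem_filter] at hκ
    obtain ⟨k, rfl⟩ : ∃ k, κ = k + 1 := by
      refine Nat.exists_eq_succ_of_ne_zero ?_
      rintro rfl
      omega
    have hGk : (2 ^ (k + 1) : ℝ) * (G k v).ncard ≤ 2 ^ (k + 1) + 4 * complexity F (3 * n) :=
      mod_cast hG k v (by have := hκ.2.2; rw [pow_succ'] at this; omega)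
    have hpos : (0 : ℝ) < 2 ^ (k + 1) := by positivity
    rw [one_add_div hpos.ne', le_div_iff₀' hpos]
    exact hGk
  calc (complexity L n : ℝ)
      ≤ (⋃ κ ∈ K, ⋃ v ∈ (hMfin κ).toFinset, G (κ - 1) v).ncard := by
        refine mod_cast Set.ncard_le_ncard hsub ?_
        exact K.finite_toSet.biUnion fun κ _ =>
          (Finset.finite_toSet _).biUnion fun v _ => hGfin _ v
    _ ≤ ∑ κ ∈ K, ∑ v ∈ (hMfin κ).toFinset, ((G (κ - 1) v).ncard : ℝ) :=
        mod_cast (K.set_ncard_biUnion_le _).trans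
          (Finset.sum_le_sum fun κ _ => Finset.set_ncard_biUnion_le _ _)
    _ ≤ markerBound M F D n := by
        refine Finset.sum_le_sum fun κ hκ => ?_
        rw [complexity, Set.ncard_eq_toFinset_card _ (hMfin κ), ← nsmul_eq_mul]
        exact Finset.sum_le_card_nsmul _ _ _ fun v _ => hcount κ hκ v

theorem two_pow_mul_ncard_image_isCut_le {v : List A} (hks : 2 ^ k ≤ s) (hkt : 2 ^ k ≤ t)
    (hn : s + t + 2 ^ k ≤ 3 * n) (f : List A → List A) :
    2 ^ (k + 1) *
        (f '' ((fun a => wordSegZ x a (s + t)) '' {a | IsCut x v (2 ^ k) s t a})).ncard ≤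
      2 ^ (k + 1) + 4 * complexity (FacZ x) (3 * n) := by
  grw [Set.ncard_image_le (finite_image_wordSegZ x _ (fun a => a) _)]
  have := mul_ncard_image_isCut_le (x := x) (v := v) (by positivity) hks hkt hn
  rw [pow_succ']
  linarith

theorem complexity_leftParts_le (x : ℤ → A) (M : Set (List A)) (hn : 2 * D ≤ n) :
    (complexity (leftParts x M D) n : ℝ) ≤ markerBound M (FacZ x) D n := by
  refine complexity_le_markerBound hn (fun k v => List.take n ''
    ((fun a => wordSegZ x a (n + 2 ^ k)) '' {a | IsCut x v (2 ^ k) n (2 ^ k) a}))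
    (fun k v => (finite_image_wordSegZ x _ (fun a => a) _).image _)
    (fun k v hk => two_pow_mul_ncard_image_isCut_le hk le_rfl (by omega) _) ?_
  rintro _ (hlt | ⟨k, s, t, a, ⟨hks, hkt, hst, v, hvM, hcut⟩, rfl⟩) hlen
  · exact absurd hlen (hlt.trans_le hn).ne
  · obtain rfl : s = n := by simpa using hlen
    exact ⟨k, hks, by omega, v, hvM, hcut.length_eq.trans (pow_succ' 2 k).symm,
      _, ⟨a, hcut.mono le_rfl hkt rfl, rfl⟩, take_wordSegZ x a (Nat.le_add_right _ _)⟩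

theorem complexity_rightParts_le (x : ℤ → A) (M : Set (List A)) (hn : 2 * D ≤ n) :
    (complexity (rightParts x M D) n : ℝ) ≤ markerBound M (FacZ x) D n := by
  refine complexity_le_markerBound hn (fun k v => List.drop (2 ^ k) ''
    ((fun a => wordSegZ x a (2 ^ k + n)) '' {a | IsCut x v (2 ^ k) (2 ^ k) n a}))
    (fun k v => (finite_image_wordSegZ x _ (fun a => a) _).image _)
    (fun k v hk => two_pow_mul_ncard_image_isCut_le le_rfl hk (by omega) _) ?_
  rintro _ (hlt | ⟨k, s, t, a, ⟨hks, hkt, hst, v, hvM, hcut⟩, rfl⟩) hlen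
  · exact absurd hlen (hlt.trans_le hn).ne
  · obtain rfl : t = n := by simpa using hlen
    refine ⟨k, hkt, by omega, v, hvM, hcut.length_eq.trans (pow_succ' 2 k).symm,
      _, ⟨a + s - (2 ^ k : ℕ), hcut.mono hks le_rfl (by omega), rfl⟩, ?_⟩
    rw [drop_wordSegZ, sub_add_cancel]

theorem MarkerSet.exists_factorization (hM : MarkerSet D M (FacZ x)) :
    ∃ S T : Set (List A), FacZ x ⊆ prodL S T ∧ ∀ n, 2 * D ≤ n →
      (complexity S n : ℝ) ≤ markerBound M (FacZ x) D n ∧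
      (complexity T n : ℝ) ≤ markerBound M (FacZ x) D n :=
  ⟨leftParts x M D, rightParts x M D, hM.facZ_subset_prodL, fun _ hn =>
    ⟨complexity_leftParts_le x M hn, complexity_rightParts_le x M hn⟩⟩

end Factorization

/-! ## Estimating the marker bound -/

section Estimate

variable {M F : Set (List A)} {D n : ℕ}

theorem sum_pow_le_div {K : Finset ℕ} {r a : ℝ} (hr : 0 ≤ r) (hr1 : r < 1) (ha : 0 ≤ a)
    (hK : ∀ k ∈ K, r ^ k ≤ a) : ∑ k ∈ K, r ^ k ≤ a / (1 - r) := by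
  have hr1' : 0 ≤ 1 - r := sub_nonneg.2 hr1.le
  rcases K.eq_empty_or_nonempty with rfl | hne
  · simpa using div_nonneg ha hr1'
  have hsub : K ⊆ Finset.Ico (K.min' hne) (K.max' hne + 1) := fun k hk =>
    Finset.mem_Ico.2 ⟨K.min'_le k hk, Nat.lt_succ_of_le (K.le_max' k hk)⟩
  calc ∑ k ∈ K, r ^ k
      ≤ ∑ k ∈ Finset.Ico (K.min' hne) (K.max' hne + 1), r ^ k :=
        Finset.sum_le_sum_of_subset_of_nonneg hsub fun k _ _ => pow_nonneg hr k
    _ ≤ r ^ K.min' hne / (1 - r) := geom_sum_Ico_le_of_lt_one hr hr1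
    _ ≤ a / (1 - r) := by gcongr; exact hK _ (K.min'_mem hne)

theorem markerBound_le (hF : Monotone (complexity F))
    (hM : ∀ m, m * complexity M m ≤ complexity F (4 * m)) (D n : ℕ) :
    markerBound M F D n ≤ 4 * D * (complexity F (8 * n) : ℝ) / n +
      64 / 3 * D ^ 2 * (complexity F (8 * n) : ℝ) * (complexity F (3 * n) : ℝ) / n ^ 2 := by
  set P := (complexity F (8 * n) : ℝ)
  set Q := (complexity F (3 * n) : ℝ)
  rw [markerBound]
  set K := {k ∈ Finset.range (2 * n + 2) | n < 2 * D * 2 ^ k ∧ 2 ^ k ≤ 2 * n}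
  have hterm (k : ℕ) (hk : k ∈ K) : (complexity M (2 ^ k) : ℝ) * (1 + 4 * Q / 2 ^ k) ≤
      P * (1 / 2) ^ k + 4 * P * Q * (1 / 4) ^ k := by
    have hkn : 2 ^ k ≤ 2 * n := (Finset.mem_filter.1 hk).2.2
    have hMk : 2 ^ k * (complexity M (2 ^ k) : ℝ) ≤ complexity F (8 * n) :=
      mod_cast (hM (2 ^ k)).trans (hF (by omega))
    calc (complexity M (2 ^ k) : ℝ) * (1 + 4 * Q / 2 ^ k)
        ≤ P / 2 ^ k * (1 + 4 * Q / 2 ^ k) := by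
          gcongr
          rwa [le_div_iff₀' (by positivity)]
      _ = P * (1 / 2) ^ k + 4 * P * Q * (1 / 4) ^ k := by
          rw [show (4 : ℝ) = 2 ^ 2 by norm_num, one_div_pow, one_div_pow, ← pow_mul, mul_comm 2 k,
            pow_mul]
          field_simp
  have hhalf (k : ℕ) (hk : k ∈ K) : (1 / 2 : ℝ) ^ k ≤ 2 * D / n := by
    obtain ⟨-, hnk, hkn⟩ := Finset.mem_filter.1 hk
    have hn : (0 : ℝ) < n := by
      have := k.two_pow_pos
      exact_mod_cast (by omega : 0 < n)
    rw [one_div_pow, div_le_div_iff₀ (by positivity) hn, one_mul]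
    exact_mod_cast hnk.le
  have hquarter (k : ℕ) (hk : k ∈ K) : (1 / 4 : ℝ) ^ k ≤ (2 * D / n) ^ 2 := by
    calc (1 / 4 : ℝ) ^ k = ((1 / 2) ^ k) ^ 2 := by rw [← pow_mul, mul_comm, pow_mul]; norm_num
      _ ≤ (2 * D / n) ^ 2 := by gcongr; exact hhalf k hk
  calc ∑ k ∈ K, (complexity M (2 ^ k) : ℝ) * (1 + 4 * Q / 2 ^ k)
      ≤ P * ∑ k ∈ K, (1 / 2) ^ k + 4 * P * Q * ∑ k ∈ K, (1 / 4) ^ k := by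
        rw [Finset.mul_sum, Finset.mul_sum, ← Finset.sum_add_distrib]
        exact Finset.sum_le_sum hterm
    _ ≤ P * (2 * D / n / (1 - 1 / 2)) + 4 * P * Q * ((2 * D / n) ^ 2 / (1 - 1 / 4)) := by
        gcongr
        · exact sum_pow_le_div (by norm_num) (by norm_num) (by positivity) hhalf
        · exact sum_pow_le_div (by norm_num) (by norm_num) (by positivity) hquarter
    _ = 4 * D * P / n + 64 / 3 * D ^ 2 * P * Q / n ^ 2 := by ring

theorem exists_factorization_of_not_eventuallyPeriodicZ [Finite A] {x : ℤ → A}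
    (hx : ¬ EventuallyPeriodicZ x) :
    ∃ S T : Set (List A), FacZ x ⊆ prodL S T ∧ ∀ n : ℕ, 6 ≤ n →
      (complexity S n : ℝ) ≤ 12 * (complexity (FacZ x) (8 * n) : ℝ) / n +
        192 * (complexity (FacZ x) (8 * n) : ℝ) * (complexity (FacZ x) (3 * n) : ℝ) / n ^ 2 ∧
      (complexity T n : ℝ) ≤ 12 * (complexity (FacZ x) (8 * n) : ℝ) / n +
        192 * (complexity (FacZ x) (8 * n) : ℝ) * (complexity (FacZ x) (3 * n) : ℝ) / n ^ 2 := by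
  obtain ⟨M, hM, hMcard⟩ := exists_markerSet_of_not_eventuallyPeriodicZ hx
  obtain ⟨S, T, hST, hbound⟩ := hM.exists_factorization
  refine ⟨S, T, hST, fun n hn => ?_⟩
  have hle := markerBound_le (complexity_facZ_mono x) hMcard 3 n
  norm_num at hle
  exact ⟨(hbound n hn).1.trans hle, (hbound n hn).2.trans hle⟩

end Estimate

/-! ## Extending recurrent words to the left -/

section Extension

variable {x : ℕ → A}

theorem wordSegZ_eq_wordSeg_iff {y : ℤ → A} {j : ℤ} {i n : ℕ} :
    wordSegZ y j n = wordSeg x i n ↔ ∀ r < n, y (j + r) = x (i + r) := by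
  simp [wordSegZ_eq_map, wordSeg, List.map_inj_left]

theorem Recurrent.exists_return (hx : Recurrent x) (n : ℕ) :
    ∃ i, n ≤ i ∧ ∀ r < n, x (i + r) = x r := by
  obtain ⟨i, hni, hi⟩ := hx (wordSeg x 0 n) ⟨0, n, rfl⟩ n
  refine ⟨i, hni, fun r hr => ?_⟩
  simpa [wordSeg, hr] using congrArg (·[r]?) hi.symm

theorem exists_forall_eventually_eq [Finite A] {ι κ : Type*} (U : Ultrafilter ι) (z : ι → κ → A) :
    ∃ y : κ → A, ∀ k, ∀ᶠ i in U, z i k = y k := by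
  have hlim (k : κ) : ∃ a, ∀ᶠ i in U, z i k = a :=
    Ultrafilter.eventually_exists_iff.1 (Filter.Eventually.of_forall fun i => ⟨z i k, rfl⟩)
  choose y hy using hlim
  exact ⟨y, hy⟩

theorem Recurrent.exists_extension [Finite A] (hx : Recurrent x) :
    ∃ y : ℤ → A, (∀ n : ℕ, y n = x n) ∧ FacZ y = Fac x := by
  choose p hp hreturn using hx.exists_return
  -- Since `n ≤ p n`, the truncation at negative positions is not seen in the limit.
  obtain ⟨y, hy⟩ := exists_forall_eventually_eq (Filter.hyperfilter ℕ)
    fun n (k : ℤ) => x (p n + k).toNat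
  have hatTop (n : ℕ) : ∀ᶠ m in (Filter.hyperfilter ℕ : Filter ℕ), n < m :=
    Nat.hyperfilter_le_atTop (Filter.eventually_gt_atTop n)
  have hyx (n : ℕ) : y n = x n := by
    obtain ⟨m, hnm, hm⟩ := ((hatTop n).and (hy n)).exists
    rw [← hm, ← Nat.cast_add, Int.toNat_natCast, hreturn m n hnm]
  refine ⟨y, hyx, Set.Subset.antisymm ?_ ?_⟩
  · rintro _ ⟨i, n, rfl⟩
    have hseg : ∀ᶠ m in (Filter.hyperfilter ℕ : Filter ℕ), ∀ r ∈ Finset.range n,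
        x (p m + (i + r)).toNat = y (i + r) :=
      (Filter.eventually_all_finset _).2 fun r _ => hy (i + r)
    obtain ⟨m, hm, hmy⟩ := ((hatTop i.natAbs).and hseg).exists
    have := hp m
    refine ⟨(p m + i).toNat, n, wordSegZ_eq_wordSeg_iff.2 fun r hr => ?_⟩
    rw [← hmy r (Finset.mem_range.2 hr)]
    congr 1
    omega
  · rintro _ ⟨i, n, rfl⟩
    exact ⟨i, n, (wordSegZ_eq_wordSeg_iff.2 fun r _ => by rw [← Nat.cast_add, hyx]).symm⟩

theorem not_eventuallyPeriodicZ_of_not_ultimatelyPeriodic {y : ℤ → A}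
    (hx : ¬ UltimatelyPeriodic x) (hyx : ∀ n : ℕ, y n = x n) : ¬ EventuallyPeriodicZ y := by
  rintro ⟨⟨p, hp, N, hN⟩, -⟩
  refine hx ⟨N.toNat, p, hp, fun n hn => ?_⟩
  rw [← hyx, ← hyx, Nat.cast_add]
  exact hN n (by omega)

end Extension

/-- for `x` an aperiodic two-sided word, or an aperiodic recurrent
one-sided word, there are `S, T` with `Fac(x) ⊆ S T` and, for every `n ≥ 6`,
`p_S(n), p_T(n) ≤ 12 p_x(8n)/n + 192 p_x(8n) p_x(3n)/n²`. -/
theorem stmt14 (A : Type u) [Fintype A] [Nonempty A] :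
    (∀ x : ℤ → A, ¬ EventuallyPeriodicZ x →
      ∃ S T : Set (List A), FacZ x ⊆ prodL S T ∧
        ∀ n : ℕ, 6 ≤ n →
          (complexity S n : ℝ) ≤
            12 * (complexity (FacZ x) (8 * n) : ℝ) / n +
            192 * (complexity (FacZ x) (8 * n) : ℝ) * (complexity (FacZ x) (3 * n) : ℝ) / n ^ 2 ∧
          (complexity T n : ℝ) ≤
            12 * (complexity (FacZ x) (8 * n) : ℝ) / n +
            192 * (complexity (FacZ x) (8 * n) : ℝ) * (complexity (FacZ x) (3 * n) : ℝ) / n ^ 2) ∧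
    (∀ x : ℕ → A, ¬ UltimatelyPeriodic x → Recurrent x →
      ∃ S T : Set (List A), Fac x ⊆ prodL S T ∧
        ∀ n : ℕ, 6 ≤ n →
          (complexity S n : ℝ) ≤
            12 * (complexity (Fac x) (8 * n) : ℝ) / n +
            192 * (complexity (Fac x) (8 * n) : ℝ) * (complexity (Fac x) (3 * n) : ℝ) / n ^ 2 ∧
          (complexity T n : ℝ) ≤
            12 * (complexity (Fac x) (8 * n) : ℝ) / n +
            192 * (complexity (Fac x) (8 * n) : ℝ) * (complexity (Fac x) (3 * n) : ℝ) / n ^ 2) := by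
  refine ⟨fun x hx => exists_factorization_of_not_eventuallyPeriodicZ hx, fun x hx hrec => ?_⟩
  obtain ⟨y, hyx, hF⟩ := hrec.exists_extension
  rw [← hF]
  exact exists_factorization_of_not_eventuallyPeriodicZ
    (not_eventuallyPeriodicZ_of_not_ultimatelyPeriodic hx hyx)
end

section
/- Let α ≥ 1 be a real number and let x be a one-sided infinite word over A with p_x(n) = O(n^α). Then the cost satisfies c(x) ≤ min{α, 2α − 2}; equivalently, for every real β > min{α, 2α − 2} there exist a positive integer k and a language S with p_S(n) = O(n^β) such that Fac(x) ⊆ S^k. -/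
open scoped ENNReal Pointwise

universe u

variable {A : Type u}

/-!
Fix `h` and a set `M` of words of length `3h`, the markers, meeting every window of length `6h` of
`x`. A factor of length between `6h` and `12h` is cut at the leftmost occurrence of a marker and at
the end of the run along which the least period of that marker continues. The first and the last
piece are either determined by their length, or end or start near an occurrence of the marker at
which its period breaks; two such occurrences are at least `h` apart, so each one accounts for `h`
factors of `x` of length `O(h)`, and a marker has only `O(p_x(O(h)) / h)` such pieces per length.

Markers come from the Rauzy graph of an order `m` between `3h` and `6h`, with its spanning tree of
first occurrences: along a tree edge the depth grows by one, so every path of length `3h` uses an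
edge outside the tree or visits a vertex whose depth lies in a prescribed residue class modulo `3h`.
There are at most `p_x(m + 1) - p_x(m) + 1` edges of the first kind and, for a good class, at most
`p_x(m) / 3h` vertices of the second; for a good `m` this makes `O(p_x(6h) / h)` markers.

Multiplying, the pieces over all dyadic `h` form a language with `O((p_x(O(n)) / n)^2)` words of
length `n`, and `Fac x` is contained in its cube.
-/

section Words

variable {x : ℕ → A}

theorem length_wordSeg (x : ℕ → A) (i n : ℕ) : (wordSeg x i n).length = n := by
  simp [wordSeg]

theorem wordSeg_eq_wordSeg_iff {i j n : ℕ} :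
    wordSeg x i n = wordSeg x j n ↔ ∀ t < n, x (i + t) = x (j + t) := by
  simp [wordSeg, List.map_inj_left]

theorem wordSeg_append_wordSeg (x : ℕ → A) (i m n : ℕ) :
    wordSeg x i m ++ wordSeg x (i + m) n = wordSeg x i (m + n) := by
  simp [wordSeg, List.range_add, Function.comp_def, Nat.add_assoc]

theorem take_wordSeg (x : ℕ → A) (i m n : ℕ) :
    (wordSeg x i n).take m = wordSeg x i (min m n) := by
  simp [wordSeg, ← List.map_take, List.take_range]

theorem drop_wordSeg (x : ℕ → A) (i m n : ℕ) :
    (wordSeg x i (m + n)).drop m = wordSeg x (i + m) n := by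
  rw [← wordSeg_append_wordSeg, List.drop_left' (length_wordSeg x i m)]

theorem wordSeg_mem_fac (x : ℕ → A) (i n : ℕ) : wordSeg x i n ∈ Fac x :=
  ⟨i, n, rfl⟩

end Words

section Complexity

theorem complexity_eq_zero {L : Set (List A)} {n : ℕ} (h : ∀ u ∈ L, u.length ≠ n) :
    complexity L n = 0 := by
  rw [complexity, Set.sep_eq_empty_iff_mem_false.2 h, Set.ncard_empty]

theorem complexity_le_one {L : Set (List A)} {n : ℕ}
    (h : ∀ u ∈ L, ∀ v ∈ L, u.length = n → v.length = n → u = v) : complexity L n ≤ 1 := by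
  have hsub : {u ∈ L | u.length = n}.Subsingleton := fun u hu v hv => h u hu.1 v hv.1 hu.2 hv.2
  exact (Set.ncard_le_one hsub.finite).2 fun u hu v hv => hsub hu hv

theorem fac_sep_length_eq_range (x : ℕ → A) (n : ℕ) :
    {u ∈ Fac x | u.length = n} = Set.range (wordSeg x · n) := by
  ext u
  constructor
  · rintro ⟨⟨i, m, rfl⟩, hm⟩
    rw [length_wordSeg] at hm
    exact ⟨i, by rw [hm]⟩
  · rintro ⟨i, rfl⟩
    exact ⟨wordSeg_mem_fac x i n, length_wordSeg x i n⟩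

theorem complexity_fac (x : ℕ → A) (n : ℕ) :
    complexity (Fac x) n = (Set.range (wordSeg x · n)).ncard := by
  rw [complexity, fac_sep_length_eq_range]

theorem injOn_wordSeg_sub {x : ℕ → A} {Q R : Set ℕ} {h L : ℕ}
    (hsep : ∀ q ∈ Q, ∀ r ∈ Q, q < r → q + h ≤ r)
    (hloc : ∀ q ∈ Q, ∀ r, wordSeg x q L = wordSeg x r L → r ∈ Q)
    (hRQ : R ⊆ Q) (hRh : ∀ q ∈ R, h ≤ q) (hR : Set.InjOn (wordSeg x · L) R) :
    Set.InjOn (fun z : ℕ × ℕ => wordSeg x (z.1 - z.2) (L + h)) (R ×ˢ Set.Iio h) := by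
  rintro ⟨q, j⟩ ⟨hq, hj : j < h⟩ ⟨r, k⟩ ⟨hr, hk : k < h⟩ heq
  dsimp only at hq hr heq
  have hhq := hRh q hq
  have hhr := hRh r hr
  have hwindow : wordSeg x q L = wordSeg x (r - k + j) L := by
    rw [wordSeg_eq_wordSeg_iff] at heq ⊢
    intro t ht
    have := heq (j + t) (by omega)
    rwa [← add_assoc, ← add_assoc, Nat.sub_add_cancel (by omega)] at this
  have hshift : r - k + j ∈ Q := hloc q (hRQ hq) _ hwindow
  have hjk : j = k := by
    have := hsep _ hshift r (hRQ hr)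
    have := hsep r (hRQ hr) _ hshift
    omega
  subst hjk
  rw [Nat.sub_add_cancel (by omega)] at hwindow
  rw [hR hq hr hwindow]

variable [Finite A]

theorem finite_sep_length (L : Set (List A)) (n : ℕ) : {u ∈ L | u.length = n}.Finite :=
  (List.finite_length_eq A n).subset fun _ hu => hu.2

theorem finite_range_wordSeg (x : ℕ → A) (n : ℕ) : (Set.range (wordSeg x · n)).Finite :=
  fac_sep_length_eq_range x n ▸ finite_sep_length (Fac x) n

theorem complexity_le_of_imp {L L' : Set (List A)} {n : ℕ}
    (h : ∀ u ∈ L, u.length = n → u ∈ L') : complexity L n ≤ complexity L' n :=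
  Set.ncard_le_ncard (fun u hu => ⟨h u hu.1 hu.2, hu.2⟩) (finite_sep_length L' n)

theorem complexity_union_le (L L' : Set (List A)) (n : ℕ) :
    complexity (L ∪ L') n ≤ complexity L n + complexity L' n := by
  refine le_trans (Set.ncard_le_ncard ?_ ?_) (Set.ncard_union_le _ _)
  · rintro u ⟨hu | hu, hn⟩
    exacts [Or.inl ⟨hu, hn⟩, Or.inr ⟨hu, hn⟩]
  · exact (finite_sep_length L n).union (finite_sep_length L' n)

theorem complexity_biUnion_le {ι : Type*} (s : Finset ι) (L : ι → Set (List A)) (n : ℕ) :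
    complexity (⋃ i ∈ s, L i) n ≤ ∑ i ∈ s, complexity (L i) n := by
  classical
  induction s using Finset.induction_on with
  | empty => simp [complexity_eq_zero]
  | insert i s hi ih =>
    rw [Finset.set_biUnion_insert, Finset.sum_insert hi]
    exact (complexity_union_le _ _ n).trans (Nat.add_le_add_left ih _)

theorem mul_complexity_biUnion_le {ι : Type*} (s : Finset ι) (L : ι → Set (List A)) {n c K : ℕ}
    (h : ∀ i ∈ s, c * complexity (L i) n ≤ K) :
    c * complexity (⋃ i ∈ s, L i) n ≤ s.card * K :=
  calc c * complexity (⋃ i ∈ s, L i) n ≤ ∑ i ∈ s, c * complexity (L i) n := by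
        rw [← Finset.mul_sum]
        exact Nat.mul_le_mul_left c (complexity_biUnion_le s L n)
    _ ≤ s.card * K := Finset.sum_le_card_nsmul s _ K h

theorem complexity_fac_mono (x : ℕ → A) : Monotone (complexity (Fac x)) := by
  intro m n hmn
  have himage : Set.range (wordSeg x · m) = List.take m '' Set.range (wordSeg x · n) := by
    rw [← Set.range_comp]
    simp [Function.comp_def, take_wordSeg, min_eq_left hmn]
  rw [complexity_fac, complexity_fac, himage]
  exact Set.ncard_image_le (finite_range_wordSeg x n)

/-- A window read at a position `q ≥ h` extends to the left in `h` ways, and the separation makes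
all the resulting factors of length `L + h` distinct; at most one position of `Q` is below `h`. -/
theorem mul_ncard_image_wordSeg_le (x : ℕ → A) {Q : Set ℕ} {h L : ℕ}
    (hsep : ∀ q ∈ Q, ∀ r ∈ Q, q < r → q + h ≤ r)
    (hloc : ∀ q ∈ Q, ∀ r, wordSeg x q L = wordSeg x r L → r ∈ Q) :
    h * ((wordSeg x · L) '' Q).ncard ≤ complexity (Fac x) (L + h) + h := by
  have hearly : ((wordSeg x · L) '' (Q ∩ Set.Iio h)).ncard ≤ 1 := by
    have hsub : (Q ∩ Set.Iio h).Subsingleton := by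
      rintro q ⟨hq, hqh : q < h⟩ r ⟨hr, hrh : r < h⟩
      have := hsep q hq r hr
      have := hsep r hr q hq
      omega
    have himage := hsub.image (wordSeg x · L)
    exact (Set.ncard_le_one himage.finite).2 fun _ hu _ hv => himage hu hv
  have hlate : ((wordSeg x · L) '' (Q ∩ Set.Ici h)).ncard * h ≤ complexity (Fac x) (L + h) := by
    obtain ⟨R, hRQ, hR⟩ := (Set.surjOn_image (wordSeg x · L) (Q ∩ Set.Ici h)).exists_bijOn_subset
    calc ((wordSeg x · L) '' (Q ∩ Set.Ici h)).ncard * h = (R ×ˢ Set.Iio h).ncard := by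
          rw [← hR.image_eq, hR.injOn.ncard_image, Set.ncard_prod]
          simp
      _ ≤ complexity (Fac x) (L + h) := by
          rw [complexity_fac]
          exact Set.ncard_le_ncard_of_injOn _ (fun z _ => ⟨_, rfl⟩)
            (injOn_wordSeg_sub hsep hloc (fun q hq => (hRQ hq).1) (fun q hq => (hRQ hq).2) hR.injOn)
            (finite_range_wordSeg x _)
  have hsplit : (wordSeg x · L) '' Q =
      (wordSeg x · L) '' (Q ∩ Set.Iio h) ∪ (wordSeg x · L) '' (Q ∩ Set.Ici h) := by
    rw [← Set.image_union, ← Set.inter_union_distrib_left, Set.Iio_union_Ici, Set.inter_univ]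
  calc h * ((wordSeg x · L) '' Q).ncard
      ≤ h * (1 + ((wordSeg x · L) '' (Q ∩ Set.Ici h)).ncard) := by
        rw [hsplit]
        exact Nat.mul_le_mul_left h ((Set.ncard_union_le _ _).trans (Nat.add_le_add_right hearly _))
    _ ≤ complexity (Fac x) (L + h) + h := by linarith

theorem mul_complexity_le_of_image_wordSeg (x : ℕ → A) {B : Set (List A)} {Q : Set ℕ} {h l L : ℕ}
    (hsep : ∀ q ∈ Q, ∀ r ∈ Q, q < r → q + h ≤ r)
    (hloc : ∀ q ∈ Q, ∀ r, wordSeg x q L = wordSeg x r L → r ∈ Q) (g : List A → List A)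
    (hB : ∀ w ∈ B, w.length = l → ∃ q ∈ Q, g (wordSeg x q L) = w) :
    h * complexity B l ≤ complexity (Fac x) (L + h) + h := by
  have hfin : ((wordSeg x · L) '' Q).Finite :=
    (finite_range_wordSeg x L).subset (Set.image_subset_range _ _)
  have hsub : {w ∈ B | w.length = l} ⊆ g '' ((wordSeg x · L) '' Q) := by
    rintro w ⟨hw, hl⟩
    obtain ⟨q, hq, rfl⟩ := hB w hw hl
    exact ⟨_, ⟨q, hq, rfl⟩, rfl⟩
  calc h * complexity B l ≤ h * ((wordSeg x · L) '' Q).ncard :=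
        Nat.mul_le_mul_left h
          ((Set.ncard_le_ncard hsub (hfin.image g)).trans (Set.ncard_image_le hfin))
    _ ≤ complexity (Fac x) (L + h) + h := mul_ncard_image_wordSeg_le x hsep hloc

end Complexity

section Periods

variable {x y : ℕ → A} {p n : ℕ}

/-- The segment `x[a, b)` has period `p`. -/
def HasPeriodOn (x : ℕ → A) (p a b : ℕ) : Prop :=
  ∀ i, a ≤ i → i + p < b → x i = x (i + p)

/-- The prefix of length `n` of `y` occurs in `x` at position `q`; markers are given as prefixes of
infinite words so that their letters can be addressed by natural numbers. -/
def OccursAt (x y : ℕ → A) (n q : ℕ) : Prop :=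
  ∀ i < n, x (q + i) = y i

theorem HasPeriodOn.mono {a b a' b' : ℕ} (hx : HasPeriodOn x p a b) (ha : a ≤ a') (hb : b' ≤ b) :
    HasPeriodOn x p a' b' :=
  fun i hi hib => hx i (ha.trans hi) (hib.trans_le hb)

theorem HasPeriodOn.append {a b a' b' : ℕ} (hx : HasPeriodOn x p a b) (hx' : HasPeriodOn x p a' b')
    (hab : a' + p ≤ b) : HasPeriodOn x p a b' := by
  intro i hi hib
  by_cases hlt : i + p < b
  · exact hx i hi hlt
  · exact hx' i (by omega) hib

theorem HasPeriodOn.of_wordSeg_eq {q r L a b : ℕ} (heq : wordSeg x q L = wordSeg x r L)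
    (hb : b ≤ L) (hx : HasPeriodOn x p (q + a) (q + b)) : HasPeriodOn x p (r + a) (r + b) := by
  rw [wordSeg_eq_wordSeg_iff] at heq
  intro i hi hib
  obtain ⟨j, rfl⟩ := Nat.exists_eq_add_of_le (show r ≤ i by omega)
  rw [add_assoc, ← heq j (by omega), ← heq (j + p) (by omega), ← add_assoc]
  exact hx (q + j) (by omega) (by omega)

theorem OccursAt.of_wordSeg_eq {q r L a : ℕ} (heq : wordSeg x q L = wordSeg x r L)
    (hL : a + n ≤ L) (hocc : OccursAt x y n (q + a)) : OccursAt x y n (r + a) := by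
  rw [wordSeg_eq_wordSeg_iff] at heq
  intro i hi
  rw [add_assoc, ← heq (a + i) (by omega), ← add_assoc, hocc i hi]

theorem OccursAt.hasPeriodOn {q : ℕ} (hocc : OccursAt x y n q) (hy : HasPeriodOn y p 0 n) :
    HasPeriodOn x p q (q + n) := by
  intro i hi hin
  obtain ⟨j, rfl⟩ := Nat.exists_eq_add_of_le hi
  rw [add_assoc, hocc j (by omega), hocc (j + p) (by omega), hy j (Nat.zero_le j) (by omega)]

theorem OccursAt.hasPeriodOn_of_add {q d : ℕ} (hocc : OccursAt x y n q)
    (hocc' : OccursAt x y n (q + d)) : HasPeriodOn y d 0 n := by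
  intro i _ hi
  rw [← hocc' i (by omega), ← hocc (i + d) hi, add_assoc, add_comm d i]

theorem OccursAt.add_period {q : ℕ} (hocc : OccursAt x y n q)
    (hx : HasPeriodOn x p q (q + n + p)) : OccursAt x y n (q + p) := by
  intro i hi
  rw [← hocc i hi, hx (q + i) (by omega) (by omega), add_right_comm]

theorem OccursAt.of_add_period {q : ℕ} (hocc : OccursAt x y n (q + p))
    (hx : HasPeriodOn x p q (q + p + n)) : OccursAt x y n q := by
  intro i hi
  rw [← hocc i hi, hx (q + i) (by omega) (by omega), add_right_comm]

theorem OccursAt.apply_eq_apply_mod {q m : ℕ} (hocc : OccursAt x y n q) (hp : 0 < p) (hpn : p ≤ n)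
    (hx : HasPeriodOn x p q (q + m)) {t : ℕ} (ht : t < m) : x (q + t) = y (t % p) := by
  induction t using Nat.strong_induction_on with
  | _ t ih =>
    rcases lt_or_ge t p with htp | hpt
    · rw [Nat.mod_eq_of_lt htp, hocc t (by omega)]
    · obtain ⟨s, rfl⟩ := Nat.exists_eq_add_of_le' hpt
      rw [← add_assoc, ← hx (q + s) (by omega) (by omega), ih s (by omega) (by omega),
        Nat.add_mod_right]

/-- `p` is the least positive period of the prefix of length `n` of `y`. -/
def IsLeastPeriod (y : ℕ → A) (p n : ℕ) : Prop :=
  IsLeast {d | 0 < d ∧ HasPeriodOn y d 0 n} p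

theorem exists_isLeastPeriod (y : ℕ → A) (hn : 0 < n) : ∃ p ≤ n, IsLeastPeriod y p n := by
  have hmem : n ∈ {d | 0 < d ∧ HasPeriodOn y d 0 n} := ⟨hn, fun i _ hi => by omega⟩
  exact ⟨_, Nat.sInf_le hmem, Nat.sInf_mem ⟨n, hmem⟩, fun _ hd => Nat.sInf_le hd⟩

theorem IsLeastPeriod.le_and_hasPeriodOn (hp : IsLeastPeriod y p n) {q d : ℕ} (hd : 0 < d)
    (hdn : 2 * d ≤ n) (hocc : OccursAt x y n q) (hocc' : OccursAt x y n (q + d)) :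
    p ≤ d ∧ HasPeriodOn x p q (q + d + n) := by
  have hpd : p ≤ d := hp.2 ⟨hd, hocc.hasPeriodOn_of_add hocc'⟩
  exact ⟨hpd, (hocc.hasPeriodOn hp.1.2).append (hocc'.hasPeriodOn hp.1.2) (by omega)⟩

end Periods

section Pieces

variable {x y : ℕ → A} {h p : ℕ}

/-- The factors `x[s, q + h)` for which the marker `y[0, 3h)` occurs at some `q ≥ s` and its period
`p` does not continue to the left of `q`, neither down to `q - p` nor down to `s`. Here `q = s + e`,
and the truncated difference `e - p` expresses `max s (q - p)` as `s + (e - p)`. -/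
def leftBroken (x y : ℕ → A) (h p : ℕ) : Set (List A) :=
  {w | ∃ s e, OccursAt x y (3 * h) (s + e) ∧ ¬ HasPeriodOn x p (s + (e - p)) (s + (e + 3 * h)) ∧
    w = wordSeg x s (e + h)}

/-- The factors `x[s, q + h)` for which the marker `y[0, 3h)` occurs at some `q ∈ [s, s + p]` and
its period `p` continues to the left down to `s`. -/
def leftPeriodic (x y : ℕ → A) (h p : ℕ) : Set (List A) :=
  {w | ∃ s e, OccursAt x y (3 * h) (s + e) ∧ e ≤ p ∧ HasPeriodOn x p s (s + (e + 3 * h)) ∧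
    w = wordSeg x s (e + h)}

/-- The factors starting `c` letters after an occurrence of the marker `y[0, 3h)` and ending before
its period `p` breaks. -/
def periodicRun (x y : ℕ → A) (h p c : ℕ) : Set (List A) :=
  {w | ∃ q l, OccursAt x y (3 * h) q ∧ HasPeriodOn x p q (q + (c + l)) ∧ w = wordSeg x (q + c) l}

/-- The factors `x[q + 2h, b)` for which the marker `y[0, 3h)` occurs at `q` and its period `p` does
not continue up to `min b (q + 3h + p)`. Here `b = q + 3h + e`. -/
def rightBroken (x y : ℕ → A) (h p : ℕ) : Set (List A) :=
  {w | ∃ q e, OccursAt x y (3 * h) q ∧ ¬ HasPeriodOn x p q (q + (3 * h + min p e)) ∧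
    w = wordSeg x (q + 2 * h) (e + h)}

/-- The words into which the marker `y[0, 3h)` cuts the factors of `x` containing it. -/
def pieces (x y : ℕ → A) (h p : ℕ) : Set (List A) :=
  leftBroken x y h p ∪ leftPeriodic x y h p ∪ periodicRun x y h p h ∪
    (periodicRun x y h p (2 * h) ∪ rightBroken x y h p)

theorem exists_left_piece {a q : ℕ} (haq : a ≤ q) (hq : OccursAt x y (3 * h) q) (hp : 0 < p) :
    ∃ e, a + e ≤ q ∧ OccursAt x y (3 * h) (a + e) ∧
      wordSeg x a (e + h) ∈ leftBroken x y h p ∪ leftPeriodic x y h p := by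
  classical
  have hex : ∃ e, OccursAt x y (3 * h) (a + e) := ⟨q - a, by rwa [Nat.add_sub_cancel' haq]⟩
  obtain ⟨e, hocc, hmin⟩ : ∃ e, OccursAt x y (3 * h) (a + e) ∧
      ∀ d, OccursAt x y (3 * h) (a + d) → e ≤ d :=
    ⟨Nat.find hex, Nat.find_spec hex, fun _ hd => Nat.find_min' hex hd⟩
  have hle : e ≤ q - a := hmin _ (by rwa [Nat.add_sub_cancel' haq])
  refine ⟨e, by omega, hocc, ?_⟩
  by_cases hper : HasPeriodOn x p (a + (e - p)) (a + (e + 3 * h))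
  · have hep : e ≤ p := by
      by_contra! hlt
      have hpred : OccursAt x y (3 * h) (a + (e - p)) :=
        OccursAt.of_add_period (p := p) (by rwa [show a + (e - p) + p = a + e by omega])
          (hper.mono le_rfl (by omega))
      have := hmin _ hpred
      omega
    rw [Nat.sub_eq_zero_of_le hep] at hper
    exact Or.inr ⟨a, e, hocc, hep, hper, rfl⟩
  · exact Or.inl ⟨a, e, hocc, hper, rfl⟩

theorem exists_right_piece (hp : 0 < p) (hph : p ≤ 3 * h) (hy : HasPeriodOn y p 0 (3 * h)) (N : ℕ) :
    ∀ q, OccursAt x y (3 * h) q → ∃ m e, m + e = N ∧ HasPeriodOn x p q (q + (m + 3 * h)) ∧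
      wordSeg x (q + m + 2 * h) (e + h) ∈ periodicRun x y h p (2 * h) ∪ rightBroken x y h p := by
  induction N using Nat.strong_induction_on with
  | _ N ih =>
    intro q hocc
    by_cases hper : HasPeriodOn x p q (q + (3 * h + min p N))
    · rcases le_or_gt N p with hNp | hpN
      · rw [min_eq_right hNp] at hper
        refine ⟨0, N, zero_add N, by simpa using hocc.hasPeriodOn hy,
          Or.inl ⟨q, N + h, hocc, ?_, rfl⟩⟩
        exact hper.mono le_rfl (by omega)
      · rw [min_eq_left hpN.le] at hper
        have hnext : OccursAt x y (3 * h) (q + p) := hocc.add_period (hper.mono le_rfl (by omega))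
        obtain ⟨m, e, hme, hrun, hpiece⟩ := ih (N - p) (by omega) (q + p) hnext
        refine ⟨p + m, e, by omega, ?_, by rwa [← add_assoc]⟩
        exact (hper.append hrun (by omega)).mono le_rfl (by omega)
    · exact ⟨0, N, zero_add N, by simpa using hocc.hasPeriodOn hy, Or.inr ⟨q, N, hocc, hper, rfl⟩⟩

theorem exists_cut_wordSeg {a N q : ℕ} (haq : a ≤ q) (hqN : q + 3 * h ≤ a + N)
    (hq : OccursAt x y (3 * h) q) (hp : 0 < p) (hph : p ≤ 3 * h) (hy : HasPeriodOn y p 0 (3 * h)) :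
    ∃ u ∈ pieces x y h p, ∃ v ∈ pieces x y h p, ∃ w ∈ pieces x y h p,
      h ≤ u.length ∧ h ≤ v.length ∧ h ≤ w.length ∧ wordSeg x a N = u ++ v ++ w := by
  obtain ⟨e, heq, hocc, hleft⟩ := exists_left_piece haq hq hp
  obtain ⟨m, f, hmf, hrun, hright⟩ :=
    exists_right_piece hp hph hy (N - (e + 3 * h)) (a + e) hocc
  have hmiddle : wordSeg x (a + e + h) (m + h) ∈ periodicRun x y h p h :=
    ⟨a + e, m + h, hocc, hrun.mono le_rfl (by omega), rfl⟩
  refine ⟨_, Or.inl (Or.inl hleft), _, Or.inl (Or.inr hmiddle), _, Or.inr hright, ?_⟩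
  simp only [length_wordSeg]
  refine ⟨by omega, by omega, by omega, ?_⟩
  rw [add_assoc a e h, wordSeg_append_wordSeg,
    show a + e + m + 2 * h = a + (e + h + (m + h)) by ring, wordSeg_append_wordSeg]
  congr 1
  omega

theorem complexity_leftPeriodic_le_one (hph : p ≤ 3 * h) (l : ℕ) :
    complexity (leftPeriodic x y h p) l ≤ 1 := by
  have hletter : ∀ {s e t}, OccursAt x y (3 * h) (s + e) → e ≤ p →
      HasPeriodOn x p s (s + (e + 3 * h)) → t < e + h →
      x (s + t) = if t < e then y (t + p - e) else y (t - e) := by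
    intro s e t hocc hep hper ht
    split_ifs with hte
    · rw [hper (s + t) (by omega) (by omega), ← hocc _ (by omega)]
      congr 1; omega
    · rw [← hocc _ (by omega)]
      congr 1; omega
  apply complexity_le_one
  rintro _ ⟨s, e, hocc, hep, hper, rfl⟩ _ ⟨s', e', hocc', -, hper', rfl⟩ hl hl'
  rw [length_wordSeg] at hl hl'
  obtain rfl : e = e' := by omega
  rw [wordSeg_eq_wordSeg_iff]
  intro t ht
  rw [hletter hocc hep hper ht, hletter hocc' hep hper' ht]

theorem complexity_periodicRun_le_one (hp : 0 < p) (hph : p ≤ 3 * h) (c l : ℕ) :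
    complexity (periodicRun x y h p c) l ≤ 1 := by
  apply complexity_le_one
  rintro _ ⟨q, k, hocc, hper, rfl⟩ _ ⟨q', k', hocc', hper', rfl⟩ hl hl'
  rw [length_wordSeg] at hl hl'
  subst hl hl'
  rw [wordSeg_eq_wordSeg_iff]
  intro t ht
  rw [add_assoc, add_assoc, hocc.apply_eq_apply_mod hp hph hper (by omega),
    hocc'.apply_eq_apply_mod hp hph hper' (by omega)]

variable [Finite A]

theorem mul_complexity_leftBroken_le (hp : IsLeastPeriod y p (3 * h)) {l : ℕ} (hl : h ≤ l) :
    h * complexity (leftBroken x y h p) l ≤ complexity (Fac x) (l + 3 * h) + h := by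
  obtain ⟨e, rfl⟩ := Nat.exists_eq_add_of_le' hl
  set Q : Set ℕ := {s | OccursAt x y (3 * h) (s + e) ∧
    ¬ HasPeriodOn x p (s + (e - p)) (s + (e + 3 * h))}
  have hsep : ∀ q ∈ Q, ∀ r ∈ Q, q < r → q + h ≤ r := by
    rintro q ⟨hq, -⟩ r ⟨hr, hbreak⟩ hqr
    by_contra! hlt
    obtain ⟨d, rfl⟩ := Nat.exists_eq_add_of_le hqr.le
    rw [add_right_comm] at hr
    obtain ⟨hpd, hper⟩ := hp.le_and_hasPeriodOn (by omega) (by omega) hq hr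
    exact hbreak (hper.mono (by omega) (by omega))
  have hloc : ∀ q ∈ Q, ∀ r, wordSeg x q (e + 3 * h) = wordSeg x r (e + 3 * h) → r ∈ Q :=
    fun q ⟨hocc, hbreak⟩ r heq =>
      ⟨hocc.of_wordSeg_eq heq le_rfl, mt (HasPeriodOn.of_wordSeg_eq heq.symm le_rfl) hbreak⟩
  rw [add_right_comm]
  refine mul_complexity_le_of_image_wordSeg x hsep hloc (List.take (e + h)) ?_
  rintro _ ⟨s, e', hocc, hbreak, rfl⟩ hlen
  rw [length_wordSeg] at hlen
  obtain rfl : e' = e := by omega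
  exact ⟨s, ⟨hocc, hbreak⟩, by rw [take_wordSeg, min_eq_left (by omega)]⟩

theorem mul_complexity_rightBroken_le (hp : IsLeastPeriod y p (3 * h)) {l : ℕ} (hl : h ≤ l) :
    h * complexity (rightBroken x y h p) l ≤ complexity (Fac x) (l + 3 * h) + h := by
  obtain ⟨e, rfl⟩ := Nat.exists_eq_add_of_le' hl
  set Q : Set ℕ := {q | OccursAt x y (3 * h) q ∧
    ¬ HasPeriodOn x p q (q + (3 * h + min p e))}
  have hsep : ∀ q ∈ Q, ∀ r ∈ Q, q < r → q + h ≤ r := by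
    rintro q ⟨hq, hbreak⟩ r ⟨hr, -⟩ hqr
    by_contra! hlt
    obtain ⟨d, rfl⟩ := Nat.exists_eq_add_of_le hqr.le
    obtain ⟨hpd, hper⟩ := hp.le_and_hasPeriodOn (by omega) (by omega) hq hr
    exact hbreak (hper.mono (by omega) (by omega))
  have hloc : ∀ q ∈ Q, ∀ r, wordSeg x q (e + 3 * h) = wordSeg x r (e + 3 * h) → r ∈ Q :=
    fun q ⟨hocc, hbreak⟩ r heq =>
      ⟨hocc.of_wordSeg_eq (a := 0) heq (by omega),
        mt (HasPeriodOn.of_wordSeg_eq (a := 0) heq.symm (by omega)) hbreak⟩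
  rw [add_right_comm]
  refine mul_complexity_le_of_image_wordSeg x hsep hloc (List.drop (2 * h)) ?_
  rintro _ ⟨q, e', hocc, hbreak, rfl⟩ hlen
  rw [length_wordSeg] at hlen
  obtain rfl : e' = e := by omega
  exact ⟨q, ⟨hocc, hbreak⟩, by rw [← drop_wordSeg, show 2 * h + (e' + h) = e' + 3 * h by ring]⟩

theorem mul_complexity_pieces_le (hp : IsLeastPeriod y p (3 * h)) (hph : p ≤ 3 * h) {l : ℕ}
    (hl : h ≤ l) :
    h * complexity (pieces x y h p) l ≤ 2 * complexity (Fac x) (l + 3 * h) + 5 * h := by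
  have hleft := mul_complexity_leftBroken_le (x := x) hp hl
  have hright := mul_complexity_rightBroken_le (x := x) hp hl
  have hsum : complexity (pieces x y h p) l ≤
      complexity (leftBroken x y h p) l + complexity (rightBroken x y h p) l + 3 := by
    have h₁ := complexity_union_le (leftBroken x y h p ∪ leftPeriodic x y h p ∪
      periodicRun x y h p h) (periodicRun x y h p (2 * h) ∪ rightBroken x y h p) l
    have h₂ := complexity_union_le (leftBroken x y h p ∪ leftPeriodic x y h p)
      (periodicRun x y h p h) l
    have h₃ := complexity_union_le (leftBroken x y h p) (leftPeriodic x y h p) l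
    have h₄ := complexity_union_le (periodicRun x y h p (2 * h)) (rightBroken x y h p) l
    have h₅ := complexity_leftPeriodic_le_one (x := x) (y := y) hph l
    have h₆ := complexity_periodicRun_le_one (x := x) (y := y) hp.1.1 hph h l
    have h₇ := complexity_periodicRun_le_one (x := x) (y := y) hp.1.1 hph (2 * h) l
    unfold pieces
    omega
  have := Nat.mul_le_mul_left h hsum
  linarith

end Pieces

section Markers

variable {x : ℕ → A} {m n : ℕ}

/-- The position of the first occurrence of the factor `wordSeg x q m`. -/
noncomputable def firstOcc (x : ℕ → A) (m q : ℕ) : ℕ :=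
  sInf {i | wordSeg x i m = wordSeg x q m}

theorem wordSeg_firstOcc (x : ℕ → A) (m q : ℕ) :
    wordSeg x (firstOcc x m q) m = wordSeg x q m :=
  Nat.sInf_mem (s := {i | wordSeg x i m = wordSeg x q m}) ⟨q, rfl⟩

theorem firstOcc_le (x : ℕ → A) (m q : ℕ) : firstOcc x m q ≤ q :=
  Nat.sInf_le rfl

theorem firstOcc_congr {q r : ℕ} (h : wordSeg x q m = wordSeg x r m) :
    firstOcc x m q = firstOcc x m r := by
  rw [firstOcc, h, firstOcc]

/-- The depth of the factor `wordSeg x q m` in the first-occurrence tree of the Rauzy graph of order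
`m`: the parent of a factor is the one read immediately to the left of its first occurrence, and the
root is the prefix of `x`. -/
noncomputable def depth (x : ℕ → A) (m q : ℕ) : ℕ :=
  if firstOcc x m q = 0 then 0 else depth x m (firstOcc x m q - 1) + 1
termination_by q
decreasing_by
  have := firstOcc_le x m q
  omega

theorem depth_congr {q r : ℕ} (h : wordSeg x q m = wordSeg x r m) : depth x m q = depth x m r := by
  rw [depth, firstOcc_congr h, ← depth]

/-- The edges of the first-occurrence tree of the Rauzy graph of order `m`, encoded as factors of
length `m + 1`. -/
def treeEdges (x : ℕ → A) (m : ℕ) : Set (List A) :=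
  {w | ∃ q, firstOcc x m q ≠ 0 ∧ w = wordSeg x (firstOcc x m q - 1) (m + 1)}

theorem treeEdges_subset_range (x : ℕ → A) (m : ℕ) :
    treeEdges x m ⊆ Set.range (wordSeg x · (m + 1)) := by
  rintro _ ⟨q, -, rfl⟩
  exact ⟨_, rfl⟩

theorem depth_succ_of_mem_treeEdges {q : ℕ} (h : wordSeg x q (m + 1) ∈ treeEdges x m) :
    depth x m (q + 1) = depth x m q + 1 := by
  obtain ⟨r, hr, heq⟩ := h
  have hparent : wordSeg x q m = wordSeg x (firstOcc x m r - 1) m := by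
    simpa only [take_wordSeg, min_eq_left (Nat.le_succ m)] using congrArg (List.take m) heq
  have hchild : wordSeg x (q + 1) m = wordSeg x r m := by
    rw [add_comm m 1] at heq
    have := congrArg (List.drop 1) heq
    rwa [drop_wordSeg, drop_wordSeg, Nat.sub_add_cancel (Nat.pos_of_ne_zero hr),
      wordSeg_firstOcc] at this
  rw [depth, firstOcc_congr hchild, if_neg hr, depth_congr hparent]

/-- The candidate markers of length `n`: the prefixes of the factors of length `m + 1` outside the
first-occurrence tree, and of the factors of length `m` whose depth is `r` modulo `n`. -/
def treeMarkers (x : ℕ → A) (m n r : ℕ) : Set (List A) :=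
  List.take n '' (Set.range (wordSeg x · (m + 1)) \ treeEdges x m ∪
    (wordSeg x · m) '' {q | depth x m q % n = r})

theorem treeMarkers_subset_range (x : ℕ → A) (hnm : n ≤ m) (r : ℕ) :
    treeMarkers x m n r ⊆ Set.range (wordSeg x · n) := by
  rintro _ ⟨_, ⟨⟨q, rfl⟩, -⟩ | ⟨q, -, rfl⟩, rfl⟩
  · exact ⟨q, by rw [take_wordSeg, min_eq_left (by omega)]⟩
  · exact ⟨q, by rw [take_wordSeg, min_eq_left hnm]⟩

theorem wordSeg_mem_treeMarkers_of_notMem {q r : ℕ} (hnm : n ≤ m)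
    (h : wordSeg x q (m + 1) ∉ treeEdges x m) : wordSeg x q n ∈ treeMarkers x m n r :=
  ⟨_, Or.inl ⟨⟨q, rfl⟩, h⟩, by rw [take_wordSeg, min_eq_left (by omega)]⟩

theorem wordSeg_mem_treeMarkers_of_depth_mod {q r : ℕ} (hnm : n ≤ m) (h : depth x m q % n = r) :
    wordSeg x q n ∈ treeMarkers x m n r :=
  ⟨_, Or.inr ⟨q, h, rfl⟩, by rw [take_wordSeg, min_eq_left hnm]⟩

theorem exists_add_mod_eq (d : ℕ) {r : ℕ} (hr : r < n) : ∃ t < n, (d + t) % n = r := by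
  obtain ⟨k, rfl⟩ := Nat.exists_eq_succ_of_ne_zero (Nat.ne_zero_of_lt hr)
  refine ⟨(r + k * d) % (k + 1), Nat.mod_lt _ k.succ_pos, ?_⟩
  rw [Nat.add_mod_mod, show d + (r + k * d) = r + (k + 1) * d by ring, Nat.add_mul_mod_self_left,
    Nat.mod_eq_of_lt hr]

theorem exists_wordSeg_mem_treeMarkers (x : ℕ → A) (hnm : n ≤ m) {r : ℕ} (hr : r < n) (a : ℕ) :
    ∃ q, a ≤ q ∧ q < a + n ∧ wordSeg x q n ∈ treeMarkers x m n r := by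
  by_cases htree : ∀ t < n, wordSeg x (a + t) (m + 1) ∈ treeEdges x m
  · have hdepth : ∀ t ≤ n, depth x m (a + t) = depth x m a + t := by
      intro t
      induction t with
      | zero => simp
      | succ t ih =>
        intro ht
        rw [← add_assoc, depth_succ_of_mem_treeEdges (htree t ht), ih (by omega), add_assoc]
    obtain ⟨t, htn, ht⟩ := exists_add_mod_eq (depth x m a) hr
    refine ⟨a + t, by omega, by omega, wordSeg_mem_treeMarkers_of_depth_mod hnm ?_⟩
    rw [hdepth t htn.le, ht]
  · push Not at htree
    obtain ⟨t, htn, ht⟩ := htree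
    exact ⟨a + t, by omega, by omega, wordSeg_mem_treeMarkers_of_notMem hnm ht⟩

variable [Finite A]

theorem complexity_fac_le_ncard_treeEdges_add_one (x : ℕ → A) (m : ℕ) :
    complexity (Fac x) m ≤ (treeEdges x m).ncard + 1 := by
  have hfin : (treeEdges x m).Finite :=
    (finite_range_wordSeg x _).subset (treeEdges_subset_range x m)
  have hsub : Set.range (wordSeg x · m) ⊆
      insert (wordSeg x 0 m) (List.drop 1 '' treeEdges x m) := by
    rintro _ ⟨q, rfl⟩
    by_cases hq : firstOcc x m q = 0
    · exact Or.inl (by rw [← hq, wordSeg_firstOcc])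
    · refine Or.inr ⟨_, ⟨q, hq, rfl⟩, ?_⟩
      rw [add_comm m 1, drop_wordSeg, Nat.sub_add_cancel (Nat.pos_of_ne_zero hq), wordSeg_firstOcc]
  calc complexity (Fac x) m ≤ (insert (wordSeg x 0 m) (List.drop 1 '' treeEdges x m)).ncard := by
        rw [complexity_fac]
        exact Set.ncard_le_ncard hsub ((hfin.image _).insert _)
    _ ≤ (treeEdges x m).ncard + 1 :=
        (Set.ncard_insert_le _ _).trans (Nat.add_le_add_right (Set.ncard_image_le hfin) 1)

theorem ncard_range_sdiff_treeEdges_le (x : ℕ → A) (m : ℕ) :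
    (Set.range (wordSeg x · (m + 1)) \ treeEdges x m).ncard ≤
      complexity (Fac x) (m + 1) - complexity (Fac x) m + 1 := by
  have hsplit := Set.ncard_sdiff_add_ncard_of_subset (treeEdges_subset_range x m)
    (finite_range_wordSeg x (m + 1))
  rw [← complexity_fac] at hsplit
  have := complexity_fac_le_ncard_treeEdges_add_one x m
  omega

theorem exists_mul_ncard_image_mod_le (x : ℕ → A) (m : ℕ) (hn : 0 < n) {f : ℕ → ℕ}
    (hf : ∀ q r, wordSeg x q m = wordSeg x r m → f q = f r) :
    ∃ r < n, n * ((wordSeg x · m) '' {q | f q % n = r}).ncard ≤ complexity (Fac x) m := by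
  classical
  obtain ⟨R, -, hR⟩ := (Set.surjOn_image (wordSeg x · m) Set.univ).exists_bijOn_subset
  rw [Set.image_univ] at hR
  have hRfin : R.Finite := hR.finite_iff_finite.2 (finite_range_wordSeg x m)
  have hcard : hRfin.toFinset.card = complexity (Fac x) m := by
    rw [complexity_fac, ← hR.image_eq, hR.injOn.ncard_image, Set.ncard_eq_toFinset_card R hRfin]
  have hfiber : ∀ r, ((wordSeg x · m) '' {q | f q % n = r}).ncard ≤
      (hRfin.toFinset.filter (f · % n = r)).card := by
    intro r
    rw [← Set.ncard_coe_finset]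
    refine le_trans (Set.ncard_le_ncard ?_ ((Finset.finite_toSet _).image (wordSeg x · m)))
      (Set.ncard_image_le (Finset.finite_toSet _))
    rintro _ ⟨q, rfl, rfl⟩
    obtain ⟨i, hi, heq⟩ := hR.surjOn ⟨q, rfl⟩
    exact ⟨i, by simpa [hi] using congrArg (· % n) (hf i q heq), heq⟩
  have hsum := Finset.card_eq_sum_card_fiberwise (s := hRfin.toFinset) (f := (f · % n))
    (t := Finset.range n) fun q _ => by simpa using Nat.mod_lt (f q) hn
  obtain ⟨r, hr, hle⟩ := Finset.exists_le_of_sum_le (s := Finset.range n)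
    (f := fun r => n * (hRfin.toFinset.filter (f · % n = r)).card)
    (g := fun _ => complexity (Fac x) m) ⟨0, Finset.mem_range.2 hn⟩
    (by rw [← Finset.mul_sum, ← hsum, hcard]; simp)
  exact ⟨r, Finset.mem_range.1 hr, (Nat.mul_le_mul_left n (hfiber r)).trans hle⟩

theorem exists_mul_succ_sub_le {f : ℕ → ℕ} (hf : Monotone f) (a : ℕ) (hn : 0 < n) :
    ∃ m, a ≤ m ∧ m < a + n ∧ n * (f (m + 1) - f m) ≤ f (a + n) := by
  have hsum : ∑ i ∈ Finset.range n, (f (a + i + 1) - f (a + i)) ≤ f (a + n) := by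
    have hshift : Monotone fun i => f (a + i) := fun i j hij => hf (by omega)
    exact (Finset.sum_range_tsub hshift n).trans_le (Nat.sub_le _ _)
  obtain ⟨i, hi, hle⟩ := Finset.exists_le_of_sum_le (s := Finset.range n)
    (f := fun i => n * (f (a + i + 1) - f (a + i))) (g := fun _ => f (a + n))
    ⟨0, Finset.mem_range.2 hn⟩ (by
      rw [← Finset.mul_sum, Finset.sum_const, Finset.card_range, smul_eq_mul]
      exact Nat.mul_le_mul_left n hsum)
  have := Finset.mem_range.1 hi
  exact ⟨a + i, by omega, by omega, hle⟩

theorem exists_markers (x : ℕ → A) (hn : 0 < n) :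
    ∃ M ⊆ Set.range (wordSeg x · n), (∀ a, ∃ q, a ≤ q ∧ q < a + n ∧ wordSeg x q n ∈ M) ∧
      n * M.ncard ≤ 2 * complexity (Fac x) (2 * n) + n := by
  have hmono := complexity_fac_mono x
  obtain ⟨m, hnm, hm, hdiff⟩ := exists_mul_succ_sub_le hmono n hn
  obtain ⟨r, hr, hlevel⟩ := exists_mul_ncard_image_mod_le x m hn (f := depth x m)
    fun _ _ => depth_congr
  refine ⟨treeMarkers x m n r, treeMarkers_subset_range x hnm r,
    exists_wordSeg_mem_treeMarkers x hnm hr, ?_⟩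
  have hfin : (Set.range (wordSeg x · (m + 1)) \ treeEdges x m ∪
      (wordSeg x · m) '' {q | depth x m q % n = r}).Finite :=
    ((finite_range_wordSeg x _).sdiff).union
      ((finite_range_wordSeg x m).subset (Set.image_subset_range _ _))
  have hcard : (treeMarkers x m n r).ncard ≤
      complexity (Fac x) (m + 1) - complexity (Fac x) m + 1 +
        ((wordSeg x · m) '' {q | depth x m q % n = r}).ncard :=
    (Set.ncard_image_le hfin).trans ((Set.ncard_union_le _ _).trans
      (Nat.add_le_add_right (ncard_range_sdiff_treeEdges_le x m) _))
  rw [two_mul n]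
  calc n * (treeMarkers x m n r).ncard
      ≤ n * (complexity (Fac x) (m + 1) - complexity (Fac x) m) + n +
          n * ((wordSeg x · m) '' {q | depth x m q % n = r}).ncard :=
        (Nat.mul_le_mul_left n hcard).trans_eq (by ring)
    _ ≤ complexity (Fac x) (n + n) + n + complexity (Fac x) (n + n) := by
        have := hmono (show m ≤ n + n by omega)
        gcongr
        omega
    _ = _ := by ring

end Markers

section Factorization

variable {x : ℕ → A} {S : Set (List A)} {h : ℕ}

theorem append_mem_powL_three {u v w : List A} (hu : u ∈ S) (hv : v ∈ S) (hw : w ∈ S) :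
    u ++ v ++ w ∈ powL S 3 :=
  ⟨u ++ v, ⟨u, ⟨[], rfl, u, hu, rfl⟩, v, hv, rfl⟩, w, hw, rfl⟩

theorem powL_mono {T : Set (List A)} (h : S ⊆ T) (k : ℕ) : powL S k ⊆ powL T k := by
  induction k with
  | zero => exact subset_rfl
  | succ k ih =>
    rintro _ ⟨u, hu, v, hv, rfl⟩
    exact ⟨u, ih hu, v, h hv, rfl⟩

variable [Finite A]

theorem exists_marker_pieces (hh : 0 < h) {v : List A} (hv : v ∈ Set.range (wordSeg x · (3 * h))) :
    ∃ T : Set (List A),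
      (∀ a q N, a ≤ q → q + 3 * h ≤ a + N → wordSeg x q (3 * h) = v →
        ∃ u₁ ∈ T, ∃ u₂ ∈ T, ∃ u₃ ∈ T,
          h ≤ u₁.length ∧ h ≤ u₂.length ∧ h ≤ u₃.length ∧ wordSeg x a N = u₁ ++ u₂ ++ u₃) ∧
      ∀ l ≥ h, h * complexity T l ≤ 2 * complexity (Fac x) (l + 3 * h) + 5 * h := by
  obtain ⟨s, rfl⟩ := hv
  obtain ⟨p, hph, hp⟩ := exists_isLeastPeriod (fun i => x (s + i)) (show 0 < 3 * h by omega)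
  refine ⟨pieces x (fun i => x (s + i)) h p, fun a q N haq hqN hq => ?_,
    fun l => mul_complexity_pieces_le hp hph⟩
  exact exists_cut_wordSeg haq hqN (wordSeg_eq_wordSeg_iff.1 hq) hp.1.1 hph hp.1.2

theorem exists_pieces (x : ℕ → A) (hh : 0 < h) :
    ∃ T : Set (List A),
      (∀ w ∈ Fac x, 6 * h ≤ w.length → ∃ u₁ ∈ T, ∃ u₂ ∈ T, ∃ u₃ ∈ T,
        h ≤ u₁.length ∧ h ≤ u₂.length ∧ h ≤ u₃.length ∧ w = u₁ ++ u₂ ++ u₃) ∧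
      ∀ l ≥ h, h ^ 2 * complexity T l ≤ (2 * complexity (Fac x) (6 * l) + 5 * l) ^ 2 := by
  obtain ⟨M, hsub, hhit, hM⟩ := exists_markers x (show 0 < 3 * h by omega)
  have hfin : M.Finite := (finite_range_wordSeg x _).subset hsub
  choose! T hcut hT using fun v hv => exists_marker_pieces hh (hsub (a := v) hv)
  refine ⟨⋃ v ∈ hfin.toFinset, T v, ?_, fun l hl => ?_⟩
  · rintro _ ⟨a, N, rfl⟩ hN
    rw [length_wordSeg] at hN
    obtain ⟨q, haq, hqa, hq⟩ := hhit a
    have hincl : T (wordSeg x q (3 * h)) ⊆ ⋃ v ∈ hfin.toFinset, T v :=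
      Set.subset_biUnion_of_mem (u := T) (hfin.mem_toFinset.2 hq)
    obtain ⟨u₁, hu₁, u₂, hu₂, u₃, hu₃, hcut⟩ := hcut _ hq a q N haq (by omega) rfl
    exact ⟨u₁, hincl hu₁, u₂, hincl hu₂, u₃, hincl hu₃, hcut⟩
  · have hunion := mul_complexity_biUnion_le hfin.toFinset T fun v hv =>
      hT v (hfin.mem_toFinset.1 hv) l hl
    rw [← Set.ncard_eq_toFinset_card M hfin] at hunion
    have hp₁ := complexity_fac_mono x (show 2 * (3 * h) ≤ 6 * l by omega)
    have hp₂ := complexity_fac_mono x (show l + 3 * h ≤ 6 * l by omega)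
    calc h ^ 2 * complexity (⋃ v ∈ hfin.toFinset, T v) l
        = h * (h * complexity (⋃ v ∈ hfin.toFinset, T v) l) := by ring
      _ ≤ h * (M.ncard * (2 * complexity (Fac x) (l + 3 * h) + 5 * h)) := by gcongr
      _ = h * M.ncard * (2 * complexity (Fac x) (l + 3 * h) + 5 * h) := by ring
      _ ≤ (2 * complexity (Fac x) (6 * l) + 5 * l) * (2 * complexity (Fac x) (6 * l) + 5 * l) := by
        gcongr
        linarith
      _ = _ := by ring

theorem exists_band_pieces (x : ℕ → A) (hh : 0 < h) :
    ∃ T : Set (List A), (∀ u ∈ T, h ≤ u.length ∧ u.length < 12 * h) ∧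
      (∀ w ∈ Fac x, 6 * h ≤ w.length → w.length < 12 * h → w ∈ powL T 3) ∧
      ∀ l, l ^ 2 * complexity T l ≤ 144 * (2 * complexity (Fac x) (6 * l) + 5 * l) ^ 2 := by
  obtain ⟨T, hcut, hT⟩ := exists_pieces x hh
  refine ⟨{u ∈ T | h ≤ u.length ∧ u.length < 12 * h}, fun u hu => hu.2, fun w hw hlo hhi => ?_,
    fun l => ?_⟩
  · obtain ⟨u₁, hu₁, u₂, hu₂, u₃, hu₃, hl₁, hl₂, hl₃, rfl⟩ := hcut w hw hlo
    simp only [List.length_append] at hhi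
    exact append_mem_powL_three ⟨hu₁, hl₁, by omega⟩ ⟨hu₂, hl₂, by omega⟩ ⟨hu₃, hl₃, by omega⟩
  · by_cases hl : h ≤ l ∧ l < 12 * h
    · have hle : complexity {u ∈ T | h ≤ u.length ∧ u.length < 12 * h} l ≤ complexity T l :=
        complexity_le_of_imp fun u hu _ => hu.1
      calc _ ≤ (12 * h) ^ 2 * complexity T l := by gcongr; exact hl.2.le
        _ = 144 * (h ^ 2 * complexity T l) := by ring
        _ ≤ _ := Nat.mul_le_mul_left 144 (hT l hl.1)
    · rw [complexity_eq_zero (by rintro u hu rfl; exact hl hu.2), mul_zero]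
      exact Nat.zero_le _

theorem mul_complexity_iUnion_le_of_dyadic {T : ℕ → Set (List A)} {c K l : ℕ}
    (hlength : ∀ k, ∀ u ∈ T k, 2 ^ k ≤ u.length ∧ u.length < 12 * 2 ^ k)
    (hT : ∀ k, c * complexity (T k) l ≤ K) : c * complexity (⋃ k, T k) l ≤ 4 * K := by
  set scales := Finset.Icc (Nat.log 2 l - 3) (Nat.log 2 l)
  have hscales : complexity (⋃ k, T k) l ≤ complexity (⋃ k ∈ scales, T k) l := by
    refine complexity_le_of_imp fun u hu hl => ?_
    obtain ⟨k, hk⟩ := Set.mem_iUnion.1 hu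
    obtain ⟨hlo, hhi⟩ := hlength k u hk
    have hk_le : k ≤ Nat.log 2 l := Nat.le_log_of_pow_le one_lt_two (hl ▸ hlo)
    have hlog : Nat.log 2 l < k + 4 := Nat.log_lt_of_lt_pow' (by omega) (by rw [pow_add]; omega)
    exact Set.mem_biUnion (Finset.mem_Icc.2 ⟨by omega, hk_le⟩) hk
  have hcard : scales.card ≤ 4 := by
    rw [Nat.card_Icc]
    omega
  calc c * complexity (⋃ k, T k) l ≤ c * complexity (⋃ k ∈ scales, T k) l :=
        Nat.mul_le_mul_left c hscales
    _ ≤ scales.card * K := mul_complexity_biUnion_le scales T fun k _ => hT k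
    _ ≤ 4 * K := Nat.mul_le_mul_right K hcard

theorem sq_mul_complexity_fac_lt_le (x : ℕ → A) (k l : ℕ) :
    l ^ 2 * complexity {w ∈ Fac x | w.length < k} l ≤ k ^ 2 * complexity (Fac x) l := by
  rcases lt_or_ge l k with hl | hl
  · have := complexity_le_of_imp (n := l) fun w (hw : w ∈ {w ∈ Fac x | w.length < k}) _ => hw.1
    gcongr
  · rw [complexity_eq_zero fun w hw hwl => (hw.2.trans_le hl).ne hwl, mul_zero]
    exact Nat.zero_le _

theorem exists_fac_subset_powL_three (x : ℕ → A) :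
    ∃ S : Set (List A), Fac x ⊆ powL S 3 ∧
      ∀ l, l ^ 2 * complexity S l ≤ 612 * (2 * complexity (Fac x) (6 * l) + 5 * l) ^ 2 := by
  choose T hlength hcut hT using fun k : ℕ => exists_band_pieces x (Nat.two_pow_pos k)
  refine ⟨{w ∈ Fac x | w.length < 6} ∪ ⋃ k, T k, fun w hw => ?_, fun l => ?_⟩
  · rcases lt_or_ge w.length 6 with hshort | hlong
    · have hnil : [] ∈ {w ∈ Fac x | w.length < 6} := ⟨⟨0, 0, rfl⟩, by simp⟩
      simpa using append_mem_powL_three (S := {w ∈ Fac x | w.length < 6} ∪ ⋃ k, T k)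
        (Or.inl ⟨hw, hshort⟩) (Or.inl hnil) (Or.inl hnil)
    · set k := Nat.log 2 (w.length / 6)
      have hlo : 2 ^ k ≤ w.length / 6 := Nat.pow_log_le_self 2 (by omega)
      have hhi : w.length / 6 < 2 ^ k * 2 := Nat.lt_pow_succ_log_self one_lt_two _
      exact powL_mono (Set.subset_union_of_subset_right (Set.subset_iUnion T k) _) 3
        (hcut k w hw (by omega) (by omega))
  · have hshort := sq_mul_complexity_fac_lt_le x 6 l
    have hlong := mul_complexity_iUnion_le_of_dyadic hlength (hT · l)
    have hp : complexity (Fac x) l ≤ (2 * complexity (Fac x) (6 * l) + 5 * l) ^ 2 := by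
      have := complexity_fac_mono x (show l ≤ 6 * l by omega)
      exact le_trans (by omega) (Nat.le_self_pow two_ne_zero _)
    have := Nat.mul_le_mul_left (l ^ 2)
      (complexity_union_le {w ∈ Fac x | w.length < 6} (⋃ k, T k) l)
    linarith

end Factorization

section PolyBound

variable {f g : ℕ → ℕ} {α β : ℝ}

theorem PolyBound.mono (hf : PolyBound f α) (h : α ≤ β) : PolyBound f β := by
  obtain ⟨C, hC⟩ := hf
  refine ⟨|C|, fun n hn => (hC n hn).trans ?_⟩
  have : (1 : ℝ) ≤ n := mod_cast hn
  gcongr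
  exact le_abs_self C

theorem PolyBound.add (hf : PolyBound f α) (hg : PolyBound g α) :
    PolyBound (fun n => f n + g n) α := by
  obtain ⟨C, hC⟩ := hf
  obtain ⟨D, hD⟩ := hg
  refine ⟨C + D, fun n hn => ?_⟩
  push_cast
  linarith [hC n hn, hD n hn]

theorem PolyBound.const_mul (hf : PolyBound f α) (c : ℕ) : PolyBound (fun n => c * f n) α := by
  obtain ⟨C, hC⟩ := hf
  refine ⟨c * C, fun n hn => ?_⟩
  push_cast
  rw [mul_assoc]
  exact mul_le_mul_of_nonneg_left (hC n hn) c.cast_nonneg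

theorem PolyBound.comp_const_mul (hf : PolyBound f α) {c : ℕ} (hc : 0 < c) :
    PolyBound (fun n => f (c * n)) α := by
  obtain ⟨C, hC⟩ := hf
  refine ⟨C * c ^ α, fun n hn => (hC (c * n) (Nat.mul_pos hc hn)).trans_eq ?_⟩
  rw [Nat.cast_mul, Real.mul_rpow c.cast_nonneg n.cast_nonneg, mul_assoc]

theorem polyBound_id (hα : 1 ≤ α) : PolyBound (fun n => n) α := by
  refine ⟨1, fun n hn => ?_⟩
  rw [one_mul]
  exact Real.self_le_rpow_of_one_le (mod_cast hn) hα

theorem PolyBound.of_sq_mul_le (hg : PolyBound g α) {c : ℕ}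
    (hfg : ∀ n, n ^ 2 * f n ≤ c * g n ^ 2) : PolyBound f (2 * α - 2) := by
  obtain ⟨C, hC⟩ := hg
  refine ⟨c * C ^ 2, fun n hn => ?_⟩
  have hpos : (0 : ℝ) < n := mod_cast hn
  have hpow : (n : ℝ) ^ (2 * α - 2) * n ^ 2 = (n ^ α) ^ 2 := by
    rw [← Real.rpow_natCast n 2, ← Real.rpow_add hpos, ← Real.rpow_mul_natCast hpos.le]
    congr 1
    push_cast
    ring
  refine le_of_mul_le_mul_left ?_ (pow_pos hpos 2)
  calc (n : ℝ) ^ 2 * f n ≤ c * (g n : ℝ) ^ 2 := mod_cast hfg n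
    _ ≤ c * (C * n ^ α) ^ 2 := by gcongr; exact hC n hn
    _ = n ^ 2 * (c * C ^ 2 * n ^ (2 * α - 2)) := by rw [mul_pow, ← hpow]; ring

end PolyBound

section Dimension

variable {L : Set (List A)} {α β : ℝ}

theorem polyDim_le {S : Set (List A)} {k : ℕ} (hk : 1 ≤ k) (hS : PolyBound (complexity S) α)
    (hL : L ⊆ powL S k) : polyDim α L ≤ k :=
  sInf_le ⟨k, rfl, hk, S, hS, hL⟩

theorem polyDim_ne_top_iff : polyDim α L ≠ ⊤ ↔
    ∃ k : ℕ, 1 ≤ k ∧ ∃ S : Set (List A), PolyBound (complexity S) α ∧ L ⊆ powL S k := by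
  constructor
  · intro h
    obtain ⟨_, ⟨k, -, hk⟩, -⟩ := sInf_lt_iff.1 h.lt_top
    exact ⟨k, hk⟩
  · rintro ⟨k, hk, S, hS, hL⟩
    exact ne_top_of_le_ne_top (ENat.natCast_ne_top k) (polyDim_le hk hS hL)

theorem polyDim_anti (L : Set (List A)) : Antitone (polyDim · L) := by
  rintro α β hαβ
  refine sInf_le_sInf ?_
  rintro _ ⟨k, rfl, hk, S, hS, hL⟩
  exact ⟨k, rfl, hk, S, hS.mono hαβ, hL⟩

theorem cost_le (hα : 0 ≤ α) (h : polyDim α L ≠ ⊤) : cost L ≤ ENNReal.ofReal α :=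
  sInf_le ⟨α, hα, rfl, h⟩

end Dimension

theorem stmt15_general [Finite A] (x : ℕ → A) {α : ℝ} (hα : 1 ≤ α)
    (hx : PolyBound (complexity (Fac x)) α) : polyDim (min α (2 * α - 2)) (Fac x) ≤ 3 := by
  rcases le_total α (2 * α - 2) with hle | hle
  · rw [min_eq_left hle]
    have hone : Fac x ⊆ powL (Fac x) 1 := fun w hw => ⟨[], rfl, w, hw, rfl⟩
    exact (polyDim_le le_rfl hx hone).trans (by norm_num)
  · rw [min_eq_right hle]
    obtain ⟨S, hS, hbound⟩ := exists_fac_subset_powL_three x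
    have hg := ((hx.comp_const_mul (c := 6) (by norm_num)).const_mul 2).add
      ((polyBound_id hα).const_mul 5)
    exact polyDim_le (by norm_num) (hg.of_sq_mul_le hbound) hS

/-- if `α ≥ 1` and `p_x(n) = O(n^α)` then `c(x) ≤ min{α, 2α-2}`;
equivalently, for every `β > min{α, 2α-2}` there are `k ≥ 1` and `S` with
`p_S(n) = O(n^β)` and `Fac(x) ⊆ S^k`. -/
theorem stmt15 (A : Type u) [Fintype A] [Nonempty A] (x : ℕ → A) (α : ℝ) (hα : 1 ≤ α)
    (hx : PolyBound (complexity (Fac x)) α) :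
    cost (Fac x) ≤ ENNReal.ofReal (min α (2 * α - 2)) ∧
    ∀ β : ℝ, min α (2 * α - 2) < β →
      ∃ k : ℕ, 1 ≤ k ∧ ∃ S : Set (List A),
        PolyBound (complexity S) β ∧ Fac x ⊆ powL S k := by
  have hdim := ne_top_of_le_ne_top (ENat.natCast_ne_top 3) (stmt15_general x hα hx)
  exact ⟨cost_le (le_min (by linarith) (by linarith)) hdim, fun β hβ =>
    polyDim_ne_top_iff.1 (ne_top_of_le_ne_top hdim (polyDim_anti (Fac x) hβ.le))⟩
end

section
/- Let u = ∏_{i=1}^{∞} a b^i = a b a b b a b b b ⋯ ∈ {a,b}^ℕ. Then there do not exist languages X, Y, Z ⊆ {a,b}* with p*_X(n) = O(n), p*_Y(n) = O(n) and p*_Z(n) = O(n) such that Fac(u) ⊆ X Y Z. In particular d*_1(u) > 3 and d_0(u) > 3. -/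
open scoped ENNReal Pointwise

universe u

variable {A : Type u}

/-!
Fix `r` and consider the factors `b^s (a b^(k+1)) ⋯ (a b^(k+r+1)) a b^t` of `u` with `s, t < M`
and `M ≤ k < 2M`: there are `M³` of them, of length at most `n = O((r+2)M)`. Split such a factor as
`x y z` with `x ∈ X`, `y ∈ Y`, `z ∈ Z`. If `x` reaches the second `a`, it determines `s` and `k`, so
`x` and `t` determine the factor, and by the linear growth of `X` only `O(nM)` factors are of this
kind; symmetrically for `z`. When `M` is large compared with `r`, most factors are therefore split
with `x` and `z` of length `O(M)` and with at least `r` and at most `r + 2` letters `a` in `y`. As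
there are only `O(M²)` such pairs `(x, z)`, the number of these words `y` is at least proportional
to `M`, that is, to `n / (r + 2)`. For a fixed `n` and `r` running over the multiples of `3`, the
sets of words `y` are disjoint, so `Y` contains at least `c n (1/2 + 1/5 + 1/8 + ⋯)` words of length
at most `n`, and the harmonic series diverges.
-/

open Finset Filter

section Complexity

variable {L : Set (List A)} {n : ℕ}

/-- The words of `L` of length at most `n`, as a finite set; their number is `p*_L(n)`. -/
noncomputable def wordsUpTo [Finite A] (L : Set (List A)) (n : ℕ) : Finset (List A) :=
  ((List.finite_length_le A n).inter_of_right L).toFinset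

@[simp]
theorem mem_wordsUpTo [Finite A] {w : List A} : w ∈ wordsUpTo L n ↔ w ∈ L ∧ w.length ≤ n := by
  simp [wordsUpTo]

theorem card_wordsUpTo [Finite A] (L : Set (List A)) (n : ℕ) :
    #(wordsUpTo L n) = accComplexity L n := by
  classical
  have hlen : ∀ w ∈ wordsUpTo L n, w.length ∈ range (n + 1) := fun w hw =>
    mem_range_succ_iff.2 (mem_wordsUpTo.1 hw).2
  rw [card_eq_sum_card_fiberwise hlen, accComplexity]
  refine sum_congr rfl fun i hi => ?_
  rw [complexity, ← Set.ncard_coe_finset]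
  congr 1
  ext w
  have hi : i ≤ n := mem_range_succ_iff.1 hi
  simp only [coe_filter, mem_wordsUpTo, Set.mem_ofPred_eq]
  grind

theorem sum_accComplexity_le [Finite A] {ι : Type*} {s : Finset ι} {K : ι → Set (List A)}
    (hK : ∀ i ∈ s, K i ⊆ L) (hd : (s : Set ι).PairwiseDisjoint K) :
    ∑ i ∈ s, accComplexity (K i) n ≤ accComplexity L n := by
  classical
  simp only [← card_wordsUpTo]
  rw [← card_biUnion]
  · refine card_le_card (biUnion_subset.2 fun i hi w hw => ?_)
    rw [mem_wordsUpTo] at hw ⊢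
    exact ⟨hK i hi hw.1, hw.2⟩
  · refine fun i hi j hj hij => Finset.disjoint_left.2 fun w hwi hwj => ?_
    exact Set.disjoint_left.1 (hd hi hj hij) (mem_wordsUpTo.1 hwi).1 (mem_wordsUpTo.1 hwj).1

theorem card_le_accComplexity_mul [Finite A] {ι : Type*} {T : Finset ι} {M : ℕ}
    (R : ι → List A → Prop) (g : ι → ℕ) (hg : ∀ i ∈ T, g i < M)
    (hR : ∀ i ∈ T, ∃ x ∈ wordsUpTo L n, R i x)
    (hinj : ∀ i j x, R i x → R j x → g i = g j → i = j) :
    #T ≤ accComplexity L n * M := by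
  rw [← card_wordsUpTo, ← card_range M, ← card_product]
  refine card_le_card_of_forall_subsingleton (fun i q => R i q.1 ∧ g i = q.2) ?_ ?_
  · intro i hi
    obtain ⟨x, hx, hRx⟩ := hR i hi
    exact ⟨(x, g i), mk_mem_product hx (mem_range.2 (hg i hi)), hRx, rfl⟩
  · rintro q - i ⟨-, hi, hgi⟩ j ⟨-, hj, hgj⟩
    exact hinj i j q.1 hi hj (hgi.trans hgj.symm)

theorem complexity_zero_le_one (L : Set (List A)) : complexity L 0 ≤ 1 := by
  have hsub : {w ∈ L | w.length = 0} ⊆ {[]} := fun w hw => List.length_eq_zero_iff.1 hw.2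
  simpa [complexity] using Set.ncard_le_ncard hsub

theorem accComplexity_insert_nil_le (L : Set (List A)) (n : ℕ) :
    accComplexity (insert [] L) n ≤ accComplexity L n + 1 := by
  have hsucc (i : ℕ) : complexity (insert [] L) (i + 1) = complexity L (i + 1) := by
    rw [complexity, complexity]
    congr 1
    ext w
    simp only [Set.mem_insert_iff, Set.mem_ofPred_eq]
    grind
  simp only [accComplexity, sum_range_succ', hsucc]
  have := complexity_zero_le_one (insert [] L)
  omega

theorem PolyBound.eventually_le_mul {f : ℕ → ℕ} (hf : PolyBound f 1) :
    ∀ᶠ C : ℕ in atTop, ∀ n, 1 ≤ n → f n ≤ C * n := by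
  obtain ⟨C₀, hC₀⟩ := hf
  filter_upwards [eventually_ge_atTop ⌈C₀⌉₊] with C hC n hn
  have hfn : (f n : ℝ) ≤ C₀ * n := by simpa using hC₀ n hn
  have hC₀C : C₀ ≤ C := Nat.ceil_le.1 hC
  have hfn' : (f n : ℝ) ≤ C * n := hfn.trans (by gcongr)
  exact_mod_cast hfn'

theorem PolyBound.accComplexity_insert_nil {α : ℝ} (hα : 0 ≤ α)
    (hL : PolyBound (accComplexity L) α) : PolyBound (accComplexity (insert [] L)) α := by
  obtain ⟨C, hC⟩ := hL
  refine ⟨C + 1, fun n hn => ?_⟩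
  have hpow : 1 ≤ (n : ℝ) ^ α := Real.one_le_rpow (by exact_mod_cast hn) hα
  calc (accComplexity (insert [] L) n : ℝ) ≤ accComplexity L n + 1 := by
        exact_mod_cast accComplexity_insert_nil_le L n
    _ ≤ C * n ^ α + n ^ α := add_le_add (hC n hn) hpow
    _ = (C + 1) * n ^ α := by ring

theorem PolyBound.accComplexity_add_one {α : ℝ} (hα : 0 ≤ α)
    (hL : PolyBound (complexity L) α) : PolyBound (accComplexity L) (α + 1) := by
  obtain ⟨C, hC⟩ := hL
  have hC₀ : 0 ≤ C := (Nat.cast_nonneg _).trans (by simpa using hC 1 le_rfl)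
  refine ⟨C + 1, fun n hn => ?_⟩
  have hn₁ : (1 : ℝ) ≤ n := by exact_mod_cast hn
  have hterm : ∀ i ∈ range n, (complexity L (i + 1) : ℝ) ≤ C * n ^ α := fun i hi => by
    have hin : ((i + 1 : ℕ) : ℝ) ≤ n := by exact_mod_cast mem_range.1 hi
    exact (hC (i + 1) (by omega)).trans (by gcongr)
  calc (accComplexity L n : ℝ)
      = ∑ i ∈ range n, (complexity L (i + 1) : ℝ) + complexity L 0 := by
        rw [accComplexity, sum_range_succ', Nat.cast_add, Nat.cast_sum]
    _ ≤ n * (C * n ^ α) + n ^ (α + 1) := by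
        gcongr
        · simpa using sum_le_sum hterm
        · calc (complexity L 0 : ℝ) ≤ 1 := by exact_mod_cast complexity_zero_le_one L
            _ ≤ n ^ (α + 1) := Real.one_le_rpow hn₁ (by positivity)
    _ = (C + 1) * n ^ (α + 1) := by
        rw [Real.rpow_add_one (by positivity)]
        ring

end Complexity

section Dimension

variable {L S T : Set (List A)}

theorem prodL_mono {S' T' : Set (List A)} (hS : S ⊆ S') (hT : T ⊆ T') :
    prodL S T ⊆ prodL S' T' := by
  rintro _ ⟨s, hs, t, ht, rfl⟩
  exact ⟨s, hS hs, t, hT ht, rfl⟩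

theorem powL_mono_s16 (hST : S ⊆ T) : ∀ k, powL S k ⊆ powL T k
  | 0 => Set.Subset.rfl
  | k + 1 => prodL_mono (powL_mono_s16 hST k) hST

theorem powL_subset_powL_of_nil_mem (hS : [] ∈ S) {m k : ℕ} (hmk : m ≤ k) :
    powL S m ⊆ powL S k :=
  monotone_nat_of_le_succ (fun _ w hw => ⟨w, hw, [], hS, w.append_nil.symm⟩) hmk

theorem powL_three (S : Set (List A)) : powL S 3 = prodL (prodL S S) S := by
  have hone : powL S 1 = S := by simp [powL, prodL]
  rw [powL, powL, hone]

theorem natCast_lt_polyDimStar {α : ℝ} (hα : 0 ≤ α) {k : ℕ}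
    (h : ∀ S : Set (List A), PolyBound (accComplexity S) α → ¬ L ⊆ powL S k) :
    (k : ℕ∞) < polyDimStar α L := by
  rw [← ENat.add_one_le_iff (ENat.natCast_ne_top k)]
  refine le_sInf ?_
  rintro _ ⟨m, rfl, -, S, hS, hLS⟩
  by_contra! hm
  have hmk : m ≤ k := Nat.lt_succ_iff.1 (by exact_mod_cast hm)
  refine h (insert [] S) (hS.accComplexity_insert_nil hα) ?_
  calc L ⊆ powL S m := hLS
    _ ⊆ powL (insert [] S) m := powL_mono_s16 (Set.subset_insert _ _) m
    _ ⊆ powL (insert [] S) k := powL_subset_powL_of_nil_mem (Set.mem_insert _ _) hmk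

theorem polyDimStar_add_one_le_polyDim {α : ℝ} (hα : 0 ≤ α) (L : Set (List A)) :
    polyDimStar (α + 1) L ≤ polyDim α L := by
  refine sInf_le_sInf ?_
  rintro _ ⟨m, rfl, hm, S, hS, hLS⟩
  exact ⟨m, rfl, hm, S, hS.accComplexity_add_one hα, hLS⟩

end Dimension

section Words

theorem wordSeg_add (x : ℕ → A) (i m n : ℕ) :
    wordSeg x i (m + n) = wordSeg x i m ++ wordSeg x (i + m) n := by
  simp [wordSeg, List.range_add, Function.comp_def, add_assoc]

theorem wordSeg_eq_replicate {x : ℕ → A} {c : A} {i n : ℕ} (h : ∀ j < n, x (i + j) = c) :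
    wordSeg x i n = List.replicate n c := by
  simpa [wordSeg, List.eq_replicate_iff] using h

theorem replicate_append_cons_inj {a b : A} (hab : a ≠ b) {s s' : ℕ} {l l' : List A} :
    List.replicate s b ++ a :: l = List.replicate s' b ++ a :: l' ↔ s = s' ∧ l = l' := by
  classical
  refine ⟨fun h => ?_, fun ⟨hs, hl⟩ => hs ▸ hl ▸ rfl⟩
  have hidx (n : ℕ) (l : List A) : (List.replicate n b ++ a :: l).idxOf a = n := by
    rw [List.idxOf_append_of_notMem (by simp [List.mem_replicate, hab])]
    simp
  obtain rfl : s = s' := by rw [← hidx s l, h, hidx]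
  exact ⟨rfl, by simpa using h⟩

end Words

namespace uWord

section Factors

/-- The position in `u` of the letter `a` that opens the block `a b^(m+1)`. -/
def aPos : ℕ → ℕ
  | 0 => 0
  | m + 1 => aPos m + (m + 2)

theorem two_mul_aPos (m : ℕ) : 2 * aPos m = m * (m + 3) := by
  induction m with
  | zero => rfl
  | succ m ih => rw [aPos]; linarith

theorem aPos_strictMono : StrictMono aPos :=
  strictMono_nat_of_lt_succ fun m => by rw [aPos]; omega

theorem apply_aPos (m : ℕ) : uWord (aPos m) = false := if_pos ⟨m, two_mul_aPos m⟩

theorem apply_of_aPos_lt_of_lt {m j : ℕ} (hmj : aPos m < j) (hjm : j < aPos (m + 1)) :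
    uWord j = true := by
  refine if_neg ?_
  rintro ⟨l, hl⟩
  obtain rfl : j = aPos l := by have := two_mul_aPos l; omega
  have hml : m < l := aPos_strictMono.lt_iff_lt.1 hmj
  have hlm : l < m + 1 := aPos_strictMono.lt_iff_lt.1 hjm
  omega

theorem wordSeg_aPos {m t : ℕ} (ht : t ≤ m + 1) :
    wordSeg uWord (aPos m) (1 + t) = false :: List.replicate t true := by
  have hb : wordSeg uWord (aPos m + 1) t = List.replicate t true :=
    wordSeg_eq_replicate fun j hj =>
      apply_of_aPos_lt_of_lt (m := m) (by omega) (by rw [aPos]; omega)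
  rw [wordSeg_add, hb]
  simp [wordSeg, apply_aPos]

/-- The factor `(a b^(k+1)) (a b^(k+2)) ⋯ (a b^(k+r))` of `u`, made of `r` consecutive blocks. -/
def blocks (k r : ℕ) : List Bool :=
  (List.range' k r).flatMap fun m => false :: List.replicate (m + 1) true

theorem blocks_succ (k r : ℕ) :
    blocks k (r + 1) = false :: List.replicate (k + 1) true ++ blocks (k + 1) r := by
  simp [blocks, List.range'_succ]

theorem blocks_succ' (k r : ℕ) :
    blocks k (r + 1) = blocks k r ++ false :: List.replicate (k + r + 1) true := by
  simp [blocks, List.range'_concat]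

theorem aPos_add_length_blocks (k r : ℕ) : aPos k + (blocks k r).length = aPos (k + r) := by
  induction r with
  | zero => simp [blocks]
  | succ r ih =>
    rw [blocks_succ', List.length_append, ← add_assoc, ih, ← add_assoc k, aPos]
    simp

theorem wordSeg_length_blocks (k r : ℕ) :
    wordSeg uWord (aPos k) (blocks k r).length = blocks k r := by
  induction r with
  | zero => rfl
  | succ r ih =>
    have hlen : (blocks k (r + 1)).length = (blocks k r).length + (1 + (k + r + 1)) := by
      simp +arith [blocks_succ']
    rw [hlen, wordSeg_add, ih, aPos_add_length_blocks, wordSeg_aPos le_rfl, blocks_succ']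

theorem count_false_blocks (k r : ℕ) : (blocks k r).count false = r := by
  induction r with
  | zero => rfl
  | succ r ih => simp [blocks_succ', ih, List.count_replicate]

/-- The factor `b^s (a b^(k+1)) ⋯ (a b^(k+r+1)) a b^t` of `u`. -/
def window (s k r t : ℕ) : List Bool :=
  List.replicate s true ++ blocks k (r + 1) ++ false :: List.replicate t true

theorem window_mem_fac {s k r t : ℕ} (hs : s ≤ k) (ht : t ≤ k + r + 2) :
    window s k r t ∈ Fac uWord := by
  have hsk : s ≤ aPos k := hs.trans (aPos_strictMono.id_le k)
  have hhead : wordSeg uWord (aPos k - s) s = List.replicate s true := by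
    refine wordSeg_eq_replicate fun j hj => ?_
    obtain ⟨k, rfl⟩ : ∃ k', k = k' + 1 := ⟨k - 1, by omega⟩
    have hstep : aPos (k + 1) = aPos k + (k + 2) := rfl
    exact apply_of_aPos_lt_of_lt (m := k) (by omega) (by omega)
  refine ⟨aPos k - s, s + (blocks k (r + 1)).length + (1 + t), ?_⟩
  rw [wordSeg_add, wordSeg_add, hhead, ← add_assoc, Nat.sub_add_cancel hsk,
    wordSeg_length_blocks, aPos_add_length_blocks, wordSeg_aPos (by omega), window]

theorem count_false_window (s k r t : ℕ) : (window s k r t).count false = r + 2 := by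
  simp [window, count_false_blocks, List.count_replicate]

theorem two_mul_length_window (s k r t : ℕ) :
    2 * (window s k r t).length = 2 * (s + t + 1) + (r + 1) * (2 * k + r + 4) := by
  have hlen : (window s k r t).length = s + t + 1 + (blocks k (r + 1)).length := by
    simp +arith [window]
  have hblocks := aPos_add_length_blocks k (r + 1)
  have hk := two_mul_aPos k
  have hkr := two_mul_aPos (k + (r + 1))
  linarith

end Factors

section Signature

/-- The word `b^s a b^j a`. A window is determined by the signatures that it and its reversal start
with. -/
def signature (s j : ℕ) : List Bool :=
  List.replicate s true ++ false :: (List.replicate j true ++ [false])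

theorem signature_inj_of_prefix {s j s' j' : ℕ} {w : List Bool} (h : signature s j <+: w)
    (h' : signature s' j' <+: w) : s = s' ∧ j = j' := by
  obtain ⟨l, rfl⟩ := h
  obtain ⟨l', h⟩ := h'
  simp only [signature, List.append_assoc, List.cons_append, List.nil_append,
    replicate_append_cons_inj Bool.false_ne_true] at h
  exact ⟨h.1.symm, h.2.1.symm⟩

theorem signature_prefix_window (s k r t : ℕ) : signature s (k + 1) <+: window s k r t := by
  cases r with
  | zero => simp [signature, window, blocks]
  | succ r => simp [signature, window, blocks_succ, List.prefix_append_right_inj]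

theorem signature_prefix_reverse_window (s k r t : ℕ) :
    signature t (k + r + 1) <+: (window s k r t).reverse :=
  ⟨(List.replicate s true ++ blocks k r).reverse, by simp [signature, window, blocks_succ']⟩

theorem window_inj {s k r t s' k' t' : ℕ} (h : window s k r t = window s' k' r t') :
    s = s' ∧ k = k' ∧ t = t' := by
  have hhead := signature_inj_of_prefix (signature_prefix_window s k r t)
    (h ▸ signature_prefix_window s' k' r t')
  have htail := signature_inj_of_prefix (signature_prefix_reverse_window s k r t)
    (h ▸ signature_prefix_reverse_window s' k' r t')
  omega

theorem signature_prefix_or_short {s j : ℕ} {x w : List Bool} (hsig : signature s j <+: w)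
    (hx : x <+: w) :
    signature s j <+: x ∨ x.length ≤ s + j + 1 ∧ x.count false ≤ 1 := by
  rcases lt_or_ge (s + j + 1) x.length with hlong | hshort
  · exact .inl (List.prefix_of_prefix_length_le hsig hx (by simpa +arith [signature] using hlong))
  · refine .inr ⟨hshort, ?_⟩
    have hinit : List.replicate s true ++ false :: List.replicate j true <+: w :=
      .trans ⟨[false], by simp [signature]⟩ hsig
    have hxinit := List.prefix_of_prefix_length_le hx hinit (by simpa +arith using hshort)
    simpa [List.count_replicate] using hxinit.sublist.count_le false

theorem window_split {s k r t : ℕ} {x y z : List Bool} (h : window s k r t = x ++ y ++ z) :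
    signature s (k + 1) <+: x ∨ signature t (k + r + 1) <+: z.reverse ∨
      x.length ≤ s + k + 2 ∧ z.length ≤ t + k + r + 2 ∧ y.count false ∈ Set.Icc r (r + 2) := by
  have hx : x <+: window s k r t := by simp [h]
  have hz : z.reverse <+: (window s k r t).reverse := by simp [h]
  rcases signature_prefix_or_short (signature_prefix_window s k r t) hx with hx | ⟨hxl, hxc⟩
  · exact .inl hx
  rcases signature_prefix_or_short (signature_prefix_reverse_window s k r t) hz with hz | ⟨hzl, hzc⟩
  · exact .inr (.inl hz)
  have hcount := count_false_window s k r t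
  rw [List.length_reverse] at hzl
  rw [List.count_reverse] at hzc
  rw [h, List.count_append, List.count_append] at hcount
  exact .inr (.inr ⟨by omega, by omega, by omega, by omega⟩)

end Signature

section Counting

variable {X Y Z : Set (List Bool)} {C r M n : ℕ}

/-- The parameters `(s, k, t)` with `s, t < M` and `M ≤ k < 2M`, indexing the `M³` windows whose
factorizations are counted. -/
def paramBox (M : ℕ) : Finset (ℕ × ℕ × ℕ) := range M ×ˢ Ico M (2 * M) ×ˢ range M

theorem mem_paramBox {s k t : ℕ} :
    (s, k, t) ∈ paramBox M ↔ s < M ∧ (M ≤ k ∧ k < 2 * M) ∧ t < M := by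
  simp [paramBox]

theorem card_paramBox (M : ℕ) : #(paramBox M) = M * (M * M) := by
  simp [paramBox, two_mul]

theorem length_window_le {s k t : ℕ} (hp : (s, k, t) ∈ paramBox M) (hr : r + 2 ≤ M) :
    (window s k r t).length ≤ 3 * M * (r + 2) := by
  obtain ⟨hs, ⟨-, hk⟩, ht⟩ := mem_paramBox.1 hp
  have hlen := two_mul_length_window s k r t
  have hprod : (r + 1) * (2 * k + r + 4) ≤ (r + 1) * (5 * M) := by gcongr; omega
  nlinarith

/-- The words of `Y` with at least `r` and at most `r + 2` letters `a`: the middle parts of the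
factorizations of `window s k r t` whose outer parts contain at most one `a` each. -/
def countSlice (Y : Set (List Bool)) (r : ℕ) : Set (List Bool) :=
  {y ∈ Y | y.count false ∈ Set.Icc r (r + 2)}

theorem pairwise_disjoint_countSlice (Y : Set (List Bool)) :
    Pairwise (Function.onFun Disjoint fun i => countSlice Y (3 * i)) := by
  refine fun i j hij => Set.disjoint_left.2 fun y hi hj => hij ?_
  have ⟨_, _⟩ := hi.2
  have ⟨_, _⟩ := hj.2
  omega

theorem card_le_of_signature_prefix {T : Finset (ℕ × ℕ × ℕ)} (hTM : T ⊆ paramBox M)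
    (hT : ∀ p ∈ T, ∃ x ∈ wordsUpTo X n, signature p.1 (p.2.1 + 1) <+: x) :
    #T ≤ accComplexity X n * M := by
  refine card_le_accComplexity_mul _ (fun p => p.2.2)
    (fun p hp => (mem_paramBox.1 (hTM hp)).2.2) hT ?_
  rintro ⟨s, k, t⟩ ⟨s', k', t'⟩ x hx hx' rfl
  obtain ⟨rfl, hk⟩ := signature_inj_of_prefix hx hx'
  obtain rfl : k = k' := by simpa using hk
  rfl

theorem card_le_of_signature_prefix_reverse {T : Finset (ℕ × ℕ × ℕ)} (hTM : T ⊆ paramBox M)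
    (hT : ∀ p ∈ T, ∃ z ∈ wordsUpTo Z n, signature p.2.2 (p.2.1 + r + 1) <+: z.reverse) :
    #T ≤ accComplexity Z n * M := by
  refine card_le_accComplexity_mul _ (fun p => p.1)
    (fun p hp => (mem_paramBox.1 (hTM hp)).1) hT ?_
  rintro ⟨s, k, t⟩ ⟨s', k', t'⟩ z hz hz' rfl
  obtain ⟨rfl, hk⟩ := signature_inj_of_prefix hz hz'
  obtain rfl : k = k' := by simpa using hk
  rfl

theorem card_le_of_window_eq_append {T : Finset (ℕ × ℕ × ℕ)} {l m : ℕ}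
    (hT : ∀ p ∈ T, ∃ x ∈ wordsUpTo X l, ∃ y ∈ wordsUpTo Y m, ∃ z ∈ wordsUpTo Z n,
      window p.1 p.2.1 r p.2.2 = x ++ y ++ z) :
    #T ≤ accComplexity X l * (accComplexity Y m * accComplexity Z n) := by
  simp only [← card_wordsUpTo, ← card_product]
  refine card_le_card_of_forall_subsingleton
    (fun p q => window p.1 p.2.1 r p.2.2 = q.1 ++ q.2.1 ++ q.2.2) ?_ ?_
  · intro p hp
    obtain ⟨x, hx, y, hy, z, hz, h⟩ := hT p hp
    exact ⟨(x, y, z), mk_mem_product hx (mk_mem_product hy hz), h⟩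
  · rintro q - ⟨s, k, t⟩ ⟨-, h⟩ ⟨s', k', t'⟩ ⟨-, h'⟩
    obtain ⟨rfl, rfl, rfl⟩ := window_inj (h.trans h'.symm)
    rfl

theorem exists_split_of_mem_paramBox (hF : Fac uWord ⊆ prodL (prodL X Y) Z) (hr : r + 2 ≤ M)
    (hn : 3 * M * (r + 2) ≤ n) {p : ℕ × ℕ × ℕ} (hp : p ∈ paramBox M) :
    (∃ x ∈ wordsUpTo X n, signature p.1 (p.2.1 + 1) <+: x) ∨
      (∃ z ∈ wordsUpTo Z n, signature p.2.2 (p.2.1 + r + 1) <+: z.reverse) ∨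
      ∃ x ∈ wordsUpTo X (4 * M), ∃ y ∈ wordsUpTo (countSlice Y r) n,
        ∃ z ∈ wordsUpTo Z (4 * M), window p.1 p.2.1 r p.2.2 = x ++ y ++ z := by
  obtain ⟨s, k, t⟩ := p
  obtain ⟨hs, ⟨hMk, hkM⟩, ht⟩ := mem_paramBox.1 hp
  obtain ⟨_, ⟨x, hx, y, hy, rfl⟩, z, hz, h⟩ :=
    hF (window_mem_fac (r := r) (hs.le.trans hMk) (t := t) (by omega))
  have hlen : x.length + y.length + z.length ≤ n := by
    simpa [h, add_assoc] using (length_window_le hp hr).trans hn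
  simp only [mem_wordsUpTo]
  rcases window_split h with hsig | hsig | ⟨hxl, hzl, hyc⟩
  · exact .inl ⟨x, ⟨hx, by omega⟩, hsig⟩
  · exact .inr (.inl ⟨z, ⟨hz, by omega⟩, hsig⟩)
  · exact .inr (.inr ⟨x, ⟨hx, by omega⟩, y, ⟨⟨hy, hyc⟩, by omega⟩, z, ⟨hz, by omega⟩, h⟩)

theorem card_paramBox_le (hF : Fac uWord ⊆ prodL (prodL X Y) Z) (hr : r + 2 ≤ M)
    (hn : 3 * M * (r + 2) ≤ n) :
    #(paramBox M) ≤ accComplexity X n * M + (accComplexity Z n * M +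
      accComplexity X (4 * M) *
        (accComplexity (countSlice Y r) n * accComplexity Z (4 * M))) := by
  classical
  rw [← filter_true_of_mem fun p hp => exists_split_of_mem_paramBox hF hr hn hp, filter_or,
    filter_or]
  refine (card_union_le _ _).trans (add_le_add ?_ ((card_union_le _ _).trans (add_le_add ?_ ?_)))
  · exact card_le_of_signature_prefix (filter_subset _ _) fun p hp => (mem_filter.1 hp).2
  · exact card_le_of_signature_prefix_reverse (filter_subset _ _) fun p hp => (mem_filter.1 hp).2
  · exact card_le_of_window_eq_append fun p hp => (mem_filter.1 hp).2

theorem le_sq_mul_accComplexity_countSlice (hX : ∀ n, 1 ≤ n → accComplexity X n ≤ C * n)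
    (hZ : ∀ n, 1 ≤ n → accComplexity Z n ≤ C * n) (hF : Fac uWord ⊆ prodL (prodL X Y) Z)
    (hM : 24 * (C + 1) * (r + 2) ≤ M) (hn : 3 * M * (r + 2) ≤ n) (hn' : n ≤ 6 * M * (r + 2)) :
    M ≤ 32 * C ^ 2 * accComplexity (countSlice Y r) n := by
  have hr : r + 2 ≤ M := by nlinarith
  have hMpos : 0 < M := by omega
  have hn₁ : 1 ≤ n := by nlinarith
  set c := accComplexity (countSlice Y r) n
  have hcube : M * M * M ≤ M * M * (12 * C * (r + 2) + 16 * C ^ 2 * c) :=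
    calc M * M * M = #(paramBox M) := by rw [card_paramBox, mul_assoc]
      _ ≤ C * n * M + (C * n * M + C * (4 * M) * (c * (C * (4 * M)))) := by
        refine (card_paramBox_le hF hr hn).trans ?_
        gcongr
        · exact hX n hn₁
        · exact hZ n hn₁
        · exact hX (4 * M) (by omega)
        · exact hZ (4 * M) (by omega)
      _ ≤ C * (6 * M * (r + 2)) * M + (C * (6 * M * (r + 2)) * M +
          C * (4 * M) * (c * (C * (4 * M)))) := by gcongr
      _ = M * M * (12 * C * (r + 2) + 16 * C ^ 2 * c) := by ring
  have hlin : M ≤ 12 * C * (r + 2) + 16 * C ^ 2 * c :=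
    Nat.le_of_mul_le_mul_left hcube (by positivity)
  linarith

theorem le_mul_accComplexity_countSlice (hX : ∀ n, 1 ≤ n → accComplexity X n ≤ C * n)
    (hZ : ∀ n, 1 ≤ n → accComplexity Z n ≤ C * n) (hF : Fac uWord ⊆ prodL (prodL X Y) Z)
    (hn : 72 * (C + 1) * (r + 2) ^ 2 ≤ n) :
    n ≤ 192 * C ^ 2 * (r + 2) * accComplexity (countSlice Y r) n := by
  set M := n / (3 * (r + 2))
  have hM : 24 * (C + 1) * (r + 2) ≤ M := by
    rw [Nat.le_div_iff_mul_le (by positivity)]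
    linarith
  have hlow : 3 * (r + 2) * M ≤ n := Nat.mul_div_le n _
  have hup : n < 3 * (r + 2) * (M + 1) := Nat.lt_mul_div_succ n (by positivity)
  have hMpos : 1 ≤ M := by nlinarith
  have hn' : n ≤ 6 * M * (r + 2) := by
    calc n ≤ 3 * (r + 2) * (M + 1) := hup.le
      _ ≤ 3 * (r + 2) * (M + M) := by gcongr
      _ = 6 * M * (r + 2) := by ring
  calc n ≤ 6 * M * (r + 2) := hn'
    _ ≤ 6 * (32 * C ^ 2 * accComplexity (countSlice Y r) n) * (r + 2) := by
      gcongr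
      exact le_sq_mul_accComplexity_countSlice hX hZ hF hM (by linarith) hn'
    _ = 192 * C ^ 2 * (r + 2) * accComplexity (countSlice Y r) n := by ring

theorem sum_one_div_le (hX : ∀ n, 1 ≤ n → accComplexity X n ≤ C * n)
    (hY : ∀ n, 1 ≤ n → accComplexity Y n ≤ C * n) (hZ : ∀ n, 1 ≤ n → accComplexity Z n ≤ C * n)
    (hF : Fac uWord ⊆ prodL (prodL X Y) Z) (I : ℕ) :
    ∑ i ∈ range I, 1 / ((i : ℝ) + 1) ≤ 576 * C ^ 3 := by
  set n := 72 * (C + 1) * (3 * I + 2) ^ 2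
  have hn : 1 ≤ n := Nat.one_le_iff_ne_zero.2 (by positivity)
  have hterm : ∀ i ∈ range I,
      n * (1 / ((i : ℝ) + 1)) ≤ 576 * C ^ 2 * accComplexity (countSlice Y (3 * i)) n := by
    intro i hi
    have hiI : i ≤ I := (mem_range.1 hi).le
    have hi₃ : 3 * i + 2 ≤ 3 * (i + 1) := by omega
    have hle : n ≤ 192 * C ^ 2 * (3 * (i + 1)) * accComplexity (countSlice Y (3 * i)) n :=
      (le_mul_accComplexity_countSlice (r := 3 * i) hX hZ hF (by unfold n; gcongr)).trans
        (by gcongr)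
    rw [mul_one_div, div_le_iff₀ (by positivity)]
    calc (n : ℝ) ≤ 192 * C ^ 2 * (3 * (i + 1)) * accComplexity (countSlice Y (3 * i)) n := by
          exact_mod_cast hle
      _ = 576 * C ^ 2 * accComplexity (countSlice Y (3 * i)) n * (i + 1) := by ring
  have hslices : ∑ i ∈ range I, accComplexity (countSlice Y (3 * i)) n ≤ C * n :=
    (sum_accComplexity_le (fun _ _ _ hy => hy.1)
      ((pairwise_disjoint_countSlice Y).set_pairwise _)).trans (hY n hn)
  refine le_of_mul_le_mul_left ?_ (by exact_mod_cast hn : (0 : ℝ) < n)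
  calc n * ∑ i ∈ range I, 1 / ((i : ℝ) + 1)
      ≤ ∑ i ∈ range I, 576 * C ^ 2 * (accComplexity (countSlice Y (3 * i)) n : ℝ) := by
        rw [mul_sum]
        exact sum_le_sum hterm
    _ = 576 * C ^ 2 * ((∑ i ∈ range I, accComplexity (countSlice Y (3 * i)) n : ℕ) : ℝ) := by
        rw [Nat.cast_sum, mul_sum]
    _ ≤ 576 * C ^ 2 * ((C * n : ℕ) : ℝ) := by gcongr
    _ = n * (576 * C ^ 3) := by push_cast; ring

theorem not_fac_subset_prodL (hX : PolyBound (accComplexity X) 1)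
    (hY : PolyBound (accComplexity Y) 1) (hZ : PolyBound (accComplexity Z) 1) :
    ¬ Fac uWord ⊆ prodL (prodL X Y) Z := by
  intro hF
  obtain ⟨C, hX, hY, hZ⟩ :=
    (hX.eventually_le_mul.and (hY.eventually_le_mul.and hZ.eventually_le_mul)).exists
  obtain ⟨I, hI⟩ := (Real.tendsto_sum_range_one_div_nat_succ_atTop.eventually_gt_atTop
    (576 * (C : ℝ) ^ 3)).exists
  exact hI.not_ge (sum_one_div_le hX hY hZ hF I)

end Counting

end uWord

/-- for `u = ∏ a b^i`, there are no `X, Y, Z` of linear accumulative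
complexity with `Fac(u) ⊆ X Y Z`; in particular `d*₁(u) > 3` and `d₀(u) > 3`. -/
theorem stmt16 :
    (¬ ∃ X Y Z : Set (List Bool),
        PolyBound (accComplexity X) 1 ∧ PolyBound (accComplexity Y) 1 ∧
        PolyBound (accComplexity Z) 1 ∧ Fac uWord ⊆ prodL (prodL X Y) Z) ∧
    3 < polyDimStar 1 (Fac uWord) ∧ 3 < polyDim 0 (Fac uWord) := by
  have hstar : 3 < polyDimStar 1 (Fac uWord) :=
    natCast_lt_polyDimStar zero_le_one fun S hS => by
      rw [powL_three]
      exact uWord.not_fac_subset_prodL hS hS hS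
  refine ⟨?_, hstar, hstar.trans_le ?_⟩
  · rintro ⟨X, Y, Z, hX, hY, hZ, hF⟩
    exact uWord.not_fac_subset_prodL hX hY hZ hF
  · simpa using polyDimStar_add_one_le_polyDim le_rfl (Fac uWord)
end
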